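/- arXiv:2604.14462 — 4 statements merged into one kernel-verified Lean document; each statement's English description precedes it below -/
import Mathlib

section
/- Let P be a finite subset of ℂ such that every point of P lies in the frontier of the convex hull (over ℝ) of P (i.e., P lies on the boundary of a convex polygon). If μ covers π in NC(P) (that is, π < μ and there is no η ∈ NC(P) with π < η < μ), then the number of blocks of μ equals the number of blocks of π minus 1. Consequently, the function ρ(π) = |P| − (number of blocks of π) is a rank function for NC(P), so NC(P) is graded. -/
open Finset

/-- A finpartition of a finite set of points in the plane is *noncrossing* if the
convex hulls (over `ℝ`) of its blocks are pairwise disjoint. -/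
def IsNoncrossing {P : Finset ℂ} (π : Finpartition P) : Prop :=
  (π.parts : Set (Finset ℂ)).Pairwise fun B₁ B₂ =>
    Disjoint (convexHull ℝ (B₁ : Set ℂ)) (convexHull ℝ (B₂ : Set ℂ))

/-- The poset `NC(P)` of noncrossing partitions of `P`, ordered by refinement:
`π ≤ μ` iff every block of `μ` is a union of blocks of `π`. -/
abbrev NC (P : Finset ℂ) : Type := {π : Finpartition P // IsNoncrossing π}

/-- The blocks of a noncrossing partition. -/
def NC.parts {P : Finset ℂ} (π : NC P) : Finset (Finset ℂ) := π.1.parts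

/-- Two points lie in a common block of a noncrossing partition. -/
def NC.SameBlock {P : Finset ℂ} (π : NC P) (a b : ℂ) : Prop :=
  ∃ B ∈ π.parts, a ∈ B ∧ b ∈ B

open scoped ComplexConjugate

/-!
Since no point of `P` is interior to the convex hull of `P`, a chord `ab` between two points of `P`
with points of `P` strictly on both sides fills the whole intersection of its line with that hull.
If `a` and `b` lie in one block of a noncrossing partition `π`, no other block of `π` crosses the
line.

A subset `M` of `P` which is not contained in a block of `π` can be split into two nonempty sets
with disjoint convex hulls, neither of which cuts a block of `π`: along such a chord, induct on the
part of `M` on one side. Without such a chord, an extreme point `v` of the convex hull of `M` lies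
in a block of `π` whose points in `M` all lie on a segment `vb` contained in a face, and removing
this segment from the hull leaves a convex set.

Splitting in this way a block of `μ` that contains several blocks of `π` gives a noncrossing
partition `η` with `π ≤ η < μ` and one block more than `μ`. When `μ` covers `π`, it is `π`.
-/


section Finpartition

variable {α : Type*} [GeneralizedBooleanAlgebra α] [DecidableEq α] {a b : α}

lemma card_parts_avoid (π : Finpartition a) (h : ∀ d ∈ π.parts, ¬ d ≤ b) :
    #(π.avoid b).parts = #π.parts := by
  have hparts : (π.avoid b).parts = π.parts.image (· \ b) := by
    ext c
    rw [Finpartition.mem_avoid, mem_image]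
    exact exists_congr fun d => and_congr_right fun hd => and_iff_right (h d hd)
  have hinj : Set.InjOn (· \ b) (π.parts : Set α) := by
    intro d hd e he hde
    by_contra hne
    have hdisj : Disjoint (d \ b) (e \ b) := (π.disjoint hd he hne).mono sdiff_le sdiff_le
    rw [← show d \ b = e \ b from hde, disjoint_self, sdiff_eq_bot_iff] at hdisj
    exact h d hd hdisj
  rw [hparts, card_image_of_injOn hinj]

/-- The finpartition obtained from `π` by removing `b` from every part and adding `b` as a
part of its own. -/
def carve (π : Finpartition a) (hb : b ≠ ⊥) (hba : b ≤ a) : Finpartition a :=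
  (π.avoid b).extend hb disjoint_sdiff_self_left (sdiff_sup_cancel hba)

lemma mem_parts_carve {π : Finpartition a} {hb : b ≠ ⊥} {hba : b ≤ a} {c : α} :
    c ∈ (carve π hb hba).parts ↔ c = b ∨ ∃ d ∈ π.parts, ¬ d ≤ b ∧ d \ b = c := by
  rw [← Finpartition.mem_avoid]
  exact mem_insert

lemma card_parts_carve {π : Finpartition a} (hb : b ≠ ⊥) (hba : b ≤ a)
    (h : ∀ d ∈ π.parts, ¬ d ≤ b) : #(carve π hb hba).parts = #π.parts + 1 := by
  rw [carve, Finpartition.card_extend, card_parts_avoid π h]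

lemma carve_le {π : Finpartition a} (hb : b ≠ ⊥) (hba : b ≤ a) {m : α} (hm : m ∈ π.parts)
    (hbm : b ≤ m) : carve π hb hba ≤ π := by
  intro c hc
  obtain rfl | ⟨d, hd, -, rfl⟩ := mem_parts_carve.1 hc
  · exact ⟨m, hm, hbm⟩
  · exact ⟨d, hd, sdiff_le⟩

lemma le_carve {π μ : Finpartition a} (hb : b ≠ ⊥) (hba : b ≤ a) (hπμ : π ≤ μ)
    (h : ∀ c ∈ π.parts, c ≤ b ∨ Disjoint c b) : π ≤ carve μ hb hba := by
  intro c hc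
  obtain hcb | hcb := h c hc
  · exact ⟨b, mem_parts_carve.2 (Or.inl rfl), hcb⟩
  · obtain ⟨d, hd, hcd⟩ := hπμ hc
    refine ⟨d \ b, mem_parts_carve.2 (Or.inr ⟨d, hd, fun hdb => ?_, rfl⟩),
      le_sdiff.2 ⟨hcd, hcb⟩⟩
    exact π.ne_bot hc (hcb.eq_bot_of_le (hcd.trans hdb))

end Finpartition

section Convexity

variable {E : Type*} [AddCommGroup E] [Module ℝ E] {K : Set E}

lemma exists_mem_segment_eq_zero (f : E →ᵃ[ℝ] ℝ) {x y : E} (hx : 0 ≤ f x) (hy : f y ≤ 0) :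
    ∃ w ∈ segment ℝ x y, f w = 0 := by
  have h : (0 : ℝ) ∈ f '' segment ℝ x y := by
    rw [image_segment, segment_symm, segment_eq_Icc (hy.trans hx)]
    exact ⟨hy, hx⟩
  exact h

lemma mem_convexHull_of_mem_convexHull_union (f : E →ᵃ[ℝ] ℝ) {s t : Set E} (hs : s.Nonempty)
    (ht : ∀ y ∈ t, f y ≤ 0)
    (h : ∀ w ∈ convexHull ℝ (s ∪ t), f w = 0 → w ∈ convexHull ℝ s) {u : E}
    (hu : u ∈ convexHull ℝ (s ∪ t)) (hfu : 0 ≤ f u) : u ∈ convexHull ℝ s := by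
  obtain rfl | htne := t.eq_empty_or_nonempty
  · rwa [Set.union_empty] at hu
  have hft : convexHull ℝ t ⊆ f ⁻¹' Set.Iic 0 :=
    convexHull_min ht ((convex_Iic 0).affine_preimage f)
  have hu' := hu
  rw [convexHull_union hs htne, mem_convexJoin] at hu'
  obtain ⟨x, hx, y, hy, hxy⟩ := hu'
  obtain ⟨w, hw, hfw⟩ := exists_mem_segment_eq_zero f hfu (hft hy)
  have hyK : y ∈ convexHull ℝ (s ∪ t) := convexHull_mono Set.subset_union_right hy
  have hws := h w ((convex_convexHull ℝ _).segment_subset hu hyK hw) hfw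
  have huw : Wbtw ℝ x u w :=
    (mem_segment_iff_wbtw.1 hxy).trans_right_left (mem_segment_iff_wbtw.1 hw)
  exact (convex_convexHull ℝ s).segment_subset hx hws huw.mem_segment

lemma exists_nonneg_lineMap_eq {v b y : E} (hv : v ∈ K.extremePoints ℝ) (hb : b ∈ K)
    (hy : y ∈ K) (hline : y ∈ line[ℝ, v, b]) : ∃ r : ℝ, 0 ≤ r ∧ AffineMap.lineMap v b r = y := by
  obtain ⟨r, rfl⟩ := mem_affineSpan_pair_iff_exists_lineMap_eq.1 hline
  obtain hr | hr := le_or_gt 0 r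
  · exact ⟨r, hr, rfl⟩
  have hvmem : v ∈ openSegment ℝ (AffineMap.lineMap v b r) b := by
    have h1r : 0 < 1 - r := by linarith
    refine ⟨1 / (1 - r), -r / (1 - r), by positivity, div_pos (by linarith) h1r,
      by field_simp; ring, ?_⟩
    rw [AffineMap.lineMap_apply_module]
    match_scalars
    · field_simp
    · field_simp
      ring
  exact ⟨0, le_rfl, by rw [AffineMap.lineMap_apply_zero, hv.2 hy hb hvmem]⟩

lemma convex_sdiff_segment (hK : Convex ℝ K) {v b : E} (hv : v ∈ K.extremePoints ℝ)
    (hb : b ∈ K) (hface : IsExtreme ℝ K (K ∩ line[ℝ, v, b])) :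
    Convex ℝ (K \ segment ℝ v b) := by
  have hparam : ∀ y ∈ K \ segment ℝ v b, y ∈ line[ℝ, v, b] →
      ∃ r : ℝ, 1 < r ∧ AffineMap.lineMap v b r = y := by
    intro y hy hline
    obtain ⟨r, hr, rfl⟩ := exists_nonneg_lineMap_eq hv hb hy.1 hline
    refine ⟨r, not_le.1 fun hr1 => hy.2 ?_, rfl⟩
    exact segment_eq_image_lineMap ℝ v b ▸ Set.mem_image_of_mem _ ⟨hr, hr1⟩
  rw [convex_iff_openSegment_subset]
  intro y hy z hz w hw
  have hwK : w ∈ K := hK.openSegment_subset hy.1 hz.1 hw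
  refine ⟨hwK, fun hwseg => ?_⟩
  rw [segment_eq_image_lineMap] at hwseg
  obtain ⟨t, ht, rfl⟩ := hwseg
  have hwline : AffineMap.lineMap v b t ∈ K ∩ line[ℝ, v, b] :=
    ⟨hwK, AffineMap.lineMap_mem_affineSpan_pair _ _ _⟩
  obtain ⟨r, hr, rfl⟩ := hparam y hy (hface.left_mem_of_mem_openSegment hy.1 hz.1 hwline hw).2
  obtain ⟨s, hs, rfl⟩ := hparam z hz (hface.right_mem_of_mem_openSegment hy.1 hz.1 hwline hw).2
  have hvb : v ≠ b := by
    rintro rfl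
    exact hy.2 (by simp)
  rw [← image_openSegment] at hw
  obtain ⟨q, hq, hqt⟩ := hw
  have hq1 : q ∈ Set.Ioi (1 : ℝ) := (convex_Ioi 1).openSegment_subset hr hs hq
  rw [AffineMap.lineMap_injective ℝ hvb hqt] at hq1
  exact not_lt.2 ht.2 hq1

end Convexity

section SegmentLength

variable {E : Type*} [NormedAddCommGroup E] [NormedSpace ℝ E] {K : Set E} {v b c : E}

lemma mem_segment_of_dist_le (hv : v ∈ K.extremePoints ℝ) (hb : b ∈ K) (hc : c ∈ K)
    (hline : c ∈ line[ℝ, v, b]) (hdist : dist c v ≤ dist b v) : c ∈ segment ℝ v b := by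
  obtain ⟨r, hr, rfl⟩ := exists_nonneg_lineMap_eq hv hb hc hline
  obtain rfl | hvb := eq_or_ne b v
  · simp
  rw [dist_lineMap_left, Real.norm_of_nonneg hr, dist_comm v] at hdist
  rw [segment_eq_image_lineMap]
  exact Set.mem_image_of_mem _ ⟨hr, (mul_le_iff_le_one_left (dist_pos.2 hvb)).1 hdist⟩

end SegmentLength

section Orient

/-- The affine function of `z` giving twice the signed area of the triangle `a`, `b`, `z`: it is
positive when `z` lies to the left of the directed line from `a` to `b`, and zero on that line. -/
noncomputable def orient (a b : ℂ) : ℂ →ᵃ[ℝ] ℝ :=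
  (Complex.imLm ∘ₗ LinearMap.mulLeft ℝ (conj (b - a))).toAffineMap.comp
    (AffineMap.id ℝ ℂ -ᵥ AffineMap.const ℝ ℂ a)

variable {K : Set ℂ} {a b c p q w x y z : ℂ}

lemma orient_apply (a b z : ℂ) :
    orient a b z = (b.re - a.re) * (z.im - a.im) - (b.im - a.im) * (z.re - a.re) := by
  have h : orient a b z = (conj (b - a) * (z - a)).im := rfl
  rw [h, Complex.mul_im, Complex.conj_re, Complex.conj_im]
  simp only [Complex.sub_re, Complex.sub_im]
  ring

lemma orient_rotate (a b c : ℂ) : orient b c a = orient a b c := by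
  simp only [orient_apply]
  ring

lemma orient_swap (a b c : ℂ) : orient b a c = -orient a b c := by
  simp only [orient_apply]
  ring

@[simp] lemma orient_self_left (a b : ℂ) : orient a b a = 0 := by
  simp [orient_apply]

@[simp] lemma orient_self_right (a b : ℂ) : orient a b b = 0 := by
  rw [← orient_rotate, ← orient_rotate, orient_self_left]

lemma ne_of_orient_ne_zero (h : orient a b c ≠ 0) : a ≠ b := by
  rintro rfl
  exact h (by rw [← orient_rotate, orient_self_left])

lemma orient_add_orient_add_orient (a b c z : ℂ) :
    orient b c z + orient c a z + orient a b z = orient a b c := by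
  simp only [orient_apply]
  ring

lemma orient_smul_eq (a b c z : ℂ) :
    orient a b c • z = orient b c z • a + orient c a z • b + orient a b z • c := by
  apply Complex.ext <;>
    simp only [orient_apply, Complex.add_re, Complex.add_im, Complex.smul_re, Complex.smul_im,
      smul_eq_mul] <;>
    ring

lemma mem_line_of_orient_eq_zero (hab : a ≠ b) (h : orient a b z = 0) : z ∈ line[ℝ, a, b] := by
  rw [mem_affineSpan_pair_iff_exists_lineMap_eq]
  have him : ((z - a) / (b - a)).im = 0 := by
    rw [orient_apply] at h
    rw [Complex.div_im, ← sub_div, Complex.sub_re, Complex.sub_re, Complex.sub_im, Complex.sub_im]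
    exact div_eq_zero_iff.2 (Or.inl (by linarith))
  refine ⟨((z - a) / (b - a)).re, ?_⟩
  have hre : ((((z - a) / (b - a)).re : ℝ) : ℂ) = (z - a) / (b - a) := Complex.ext rfl him.symm
  rw [AffineMap.lineMap_apply, vsub_eq_sub, vadd_eq_add, Complex.real_smul, hre,
    div_mul_cancel₀ _ (sub_ne_zero.2 hab.symm), sub_add_cancel]

lemma orient_eq_zero_of_mem_line (h : z ∈ line[ℝ, a, b]) : orient a b z = 0 := by
  obtain ⟨r, rfl⟩ := mem_affineSpan_pair_iff_exists_lineMap_eq.1 h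
  simp [AffineMap.apply_lineMap]

lemma orient_combo {s t : ℝ} (hst : s + t = 1) :
    orient a b (s • p + t • q) = s * orient a b p + t * orient a b q :=
  Convex.combo_affine_apply hst

lemma mem_of_orient_nonneg (hK : Convex ℝ K) (ha : a ∈ K) (hb : b ∈ K) (hc : c ∈ K)
    (habc : 0 < orient a b c) (hab : 0 ≤ orient a b z) (hbc : 0 ≤ orient b c z)
    (hca : 0 ≤ orient c a z) : z ∈ K := by
  let weight : Fin 3 → ℝ :=
    ![orient b c z / orient a b c, orient c a z / orient a b c, orient a b z / orient a b c]
  have hweight : ∀ i ∈ univ, 0 ≤ weight i := by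
    intro i _
    fin_cases i
    exacts [div_nonneg hbc habc.le, div_nonneg hca habc.le, div_nonneg hab habc.le]
  have hsum : ∑ i, weight i = 1 := by
    simp [weight, Fin.sum_univ_three, ← add_div, orient_add_orient_add_orient, habc.ne']
  have hz : ∑ i, weight i • ![a, b, c] i = z := by
    simp only [weight, Fin.sum_univ_three, Matrix.cons_val, div_eq_inv_mul, mul_smul, ← smul_add]
    rw [← orient_smul_eq, inv_smul_smul₀ habc.ne']
  rw [← hz]
  exact hK.sum_mem hweight hsum fun i _ => by fin_cases i <;> assumption

lemma mem_of_orient_nonneg_of_quadrilateral (hK : Convex ℝ K) (hp : p ∈ K) (hq : q ∈ K)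
    (hx : x ∈ K) (hz : z ∈ K) (hpqx : 0 < orient p q x) (hpqz : orient p q z < 0)
    (hqx : 0 ≤ orient q x y) (hxp : 0 ≤ orient x p y) (hpz : 0 ≤ orient p z y)
    (hzq : 0 ≤ orient z q y) : y ∈ K := by
  obtain hy | hy := le_total 0 (orient p q y)
  · exact mem_of_orient_nonneg hK hp hq hx hpqx hy hqx hxp
  · refine mem_of_orient_nonneg hK hq hp hz ?_ ?_ hpz hzq
    · rwa [orient_swap, neg_pos]
    · rwa [orient_swap, neg_nonneg]

lemma mem_interior_of_mem_openSegment (hK : Convex ℝ K) (hp : p ∈ K) (hq : q ∈ K) (hx : x ∈ K)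
    (hz : z ∈ K) (ha : a ∈ openSegment ℝ p q) (hax : 0 < orient p a x)
    (haz : orient p a z < 0) : a ∈ interior K := by
  obtain ⟨s, t, hs, ht, hst, rfl⟩ := ha
  have hpqy (y : ℂ) : orient p (s • p + t • q) y = t * orient p q y := by
    rw [← orient_rotate, ← orient_rotate, orient_combo hst, orient_self_right, mul_zero, zero_add,
      orient_rotate, orient_rotate]
  rw [hpqy] at hax haz
  have hx' : 0 < orient p q x := pos_of_mul_pos_right hax ht.le
  have hz' : orient p q z < 0 := by
    by_contra! h0
    exact absurd haz (mul_nonneg ht.le h0).not_gt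
  let U : Set ℂ := {y | 0 < orient q x y ∧ 0 < orient x p y ∧ 0 < orient p z y ∧ 0 < orient z q y}
  have hUK : U ⊆ K := fun y ⟨hqx, hxp, hpz, hzq⟩ =>
    mem_of_orient_nonneg_of_quadrilateral hK hp hq hx hz hx' hz' hqx.le hxp.le hpz.le hzq.le
  have hU : IsOpen U := by
    have hopen (c d : ℂ) : IsOpen {y | 0 < orient c d y} :=
      isOpen_lt continuous_const (orient c d).continuous_of_finiteDimensional
    exact (hopen q x).inter ((hopen x p).inter ((hopen p z).inter (hopen z q)))
  refine mem_interior.2 ⟨U, hUK, hU, ?_, ?_, ?_, ?_⟩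
  · rw [orient_combo hst, orient_rotate p q x, orient_self_left]
    linarith [mul_pos hs hx']
  · rw [orient_combo hst, orient_self_right, orient_rotate q x p, orient_rotate p q x]
    linarith [mul_pos ht hx']
  · rw [orient_combo hst, orient_self_left, orient_rotate q p z, orient_swap p q z]
    linarith [mul_neg_of_pos_of_neg ht hz']
  · rw [orient_combo hst, orient_self_right, orient_rotate p z q, orient_rotate q p z,
      orient_swap p q z]
    linarith [mul_neg_of_pos_of_neg hs hz']

lemma mem_segment_of_orient_eq_zero (hK : Convex ℝ K) (ha : a ∈ K) (hb : b ∈ K)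
    (haK : a ∉ interior K) (hbK : b ∉ interior K) (hx : x ∈ K) (hz : z ∈ K) (hw : w ∈ K)
    (hax : 0 < orient a b x) (haz : orient a b z < 0) (haw : orient a b w = 0) :
    w ∈ segment ℝ a b := by
  have hab : a ≠ b := ne_of_orient_ne_zero hax.ne'
  obtain h | h | h := (collinear_insert_of_mem_affineSpan_pair
    (mem_line_of_orient_eq_zero hab haw)).wbtw_or_wbtw_or_wbtw
  · obtain rfl | hwa := eq_or_ne w a
    · exact left_mem_segment ℝ w b
    have haseg : a ∈ openSegment ℝ b w :=
      mem_openSegment_of_ne_left_right hab.symm hwa h.symm.mem_segment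
    refine absurd (mem_interior_of_mem_openSegment hK hb hw hz hx haseg ?_ ?_) haK
    · rwa [orient_swap, neg_pos]
    · rwa [orient_swap, neg_neg_iff_pos]
  · obtain rfl | hwb := eq_or_ne w b
    · exact right_mem_segment ℝ a w
    have hbseg : b ∈ openSegment ℝ a w := mem_openSegment_of_ne_left_right hab hwb h.mem_segment
    exact absurd (mem_interior_of_mem_openSegment hK ha hw hx hz hbseg hax haz) hbK
  · exact h.symm.mem_segment

lemma isExtreme_inter_line (hab : a ≠ b) (hK : ∀ y ∈ K, 0 ≤ orient a b y) :
    IsExtreme ℝ K (K ∩ line[ℝ, a, b]) := by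
  refine ⟨Set.inter_subset_left, fun y hy z hz w hw hwyz => ⟨hy, ?_⟩⟩
  obtain ⟨s, t, hs, ht, hst, rfl⟩ := hwyz
  have h0 := orient_eq_zero_of_mem_line hw.2
  rw [orient_combo hst] at h0
  refine mem_line_of_orient_eq_zero hab (le_antisymm ?_ (hK y hy))
  exact nonpos_of_mul_nonpos_right (by linarith [mul_nonneg ht.le (hK z hz)]) hs

end Orient

namespace NC

variable {P M S : Finset ℂ} {π μ : NC P} {a b c d w x y : ℂ}

lemma sameBlock_refl (ha : a ∈ P) : π.SameBlock a a := by
  obtain ⟨B, hB, haB⟩ := π.1.exists_mem ha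
  exact ⟨B, hB, haB, haB⟩

lemma SameBlock.symm (h : π.SameBlock a b) : π.SameBlock b a := by
  obtain ⟨B, hB, ha, hb⟩ := h
  exact ⟨B, hB, hb, ha⟩

lemma SameBlock.trans (hab : π.SameBlock a b) (hbc : π.SameBlock b c) : π.SameBlock a c := by
  obtain ⟨B, hB, ha, hb⟩ := hab
  obtain ⟨C, hC, hb', hc⟩ := hbc
  rw [π.1.eq_of_mem_parts hC hB hb' hb] at hc
  exact ⟨B, hB, ha, hc⟩

lemma sameBlock_of_mem_convexHull {B C : Finset ℂ} (hB : B ∈ π.parts) (hC : C ∈ π.parts)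
    (hwB : w ∈ convexHull ℝ (B : Set ℂ)) (hwC : w ∈ convexHull ℝ (C : Set ℂ)) (ha : a ∈ B)
    (hb : b ∈ C) : π.SameBlock a b := by
  have hBC : B = C := by
    by_contra hne
    exact Set.disjoint_left.1 (π.2 hB hC hne) hwB hwC
  exact ⟨B, hB, ha, hBC ▸ hb⟩

lemma sameBlock_of_mem_segment (hab : π.SameBlock a b) (hcd : π.SameBlock c d)
    (hwab : w ∈ segment ℝ a b) (hwcd : w ∈ segment ℝ c d) : π.SameBlock a c := by
  obtain ⟨B, hB, ha, hb⟩ := hab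
  obtain ⟨C, hC, hc, hd⟩ := hcd
  exact sameBlock_of_mem_convexHull hB hC (segment_subset_convexHull ha hb hwab)
    (segment_subset_convexHull hc hd hwcd) ha hc

/-- A subset `S` of `M` *splits* `M` if it is proper and nonempty, the convex hulls of `S` and
`M \ S` are disjoint, and no block of `π` contains both a point of `S` and one of `M \ S`. -/
structure IsSplitting (π : NC P) (M S : Finset ℂ) : Prop where
  subset : S ⊆ M
  nonempty : S.Nonempty
  nonempty_sdiff : (M \ S).Nonempty
  disjoint : Disjoint (convexHull ℝ (S : Set ℂ)) (convexHull ℝ ((M \ S : Finset ℂ) : Set ℂ))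
  mem_of_sameBlock : ∀ x ∈ S, ∀ y ∈ M, π.SameBlock x y → y ∈ S

lemma IsSplitting.compl (h : π.IsSplitting M S) : π.IsSplitting M (M \ S) where
  subset := sdiff_subset
  nonempty := h.nonempty_sdiff
  nonempty_sdiff := by rw [Finset.sdiff_sdiff_eq_self h.subset]; exact h.nonempty
  disjoint := by rw [Finset.sdiff_sdiff_eq_self h.subset]; exact h.disjoint.symm
  mem_of_sameBlock x hx y hy hxy := mem_sdiff.2 ⟨hy, fun hyS =>
    (mem_sdiff.1 hx).2 (h.mem_of_sameBlock y hyS x (mem_sdiff.1 hx).1 hxy.symm)⟩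

/-- Two points `a` and `b` of `M` form a *cutting chord* if they lie in the same block of `π` and
`M` has points strictly on both sides of the line through them. -/
structure IsCuttingChord (π : NC P) (M : Finset ℂ) (a b : ℂ) : Prop where
  left_mem : a ∈ M
  right_mem : b ∈ M
  sameBlock : π.SameBlock a b
  exists_pos : ∃ x ∈ M, 0 < orient a b x
  exists_neg : ∃ z ∈ M, orient a b z < 0

namespace IsCuttingChord

lemma symm (h : π.IsCuttingChord M a b) : π.IsCuttingChord M b a where
  left_mem := h.right_mem
  right_mem := h.left_mem
  sameBlock := h.sameBlock.symm
  exists_pos := by simpa only [orient_swap a b, neg_pos] using h.exists_neg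
  exists_neg := by simpa only [orient_swap a b, neg_neg_iff_pos] using h.exists_pos

lemma mem_segment (h : π.IsCuttingChord M a b)
    (hP : ∀ p ∈ P, p ∉ interior (convexHull ℝ (P : Set ℂ))) (hM : M ⊆ P)
    (hw : w ∈ convexHull ℝ (P : Set ℂ)) (haw : orient a b w = 0) : w ∈ segment ℝ a b := by
  obtain ⟨x, hx, hax⟩ := h.exists_pos
  obtain ⟨z, hz, haz⟩ := h.exists_neg
  have hMK : ∀ y ∈ M, y ∈ convexHull ℝ (P : Set ℂ) := fun y hy => subset_convexHull ℝ _ (hM hy)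
  exact mem_segment_of_orient_eq_zero (convex_convexHull ℝ _) (hMK a h.left_mem)
    (hMK b h.right_mem) (hP a (hM h.left_mem)) (hP b (hM h.right_mem)) (hMK x hx) (hMK z hz) hw
    hax haz haw

lemma sameBlock_of_orient (h : π.IsCuttingChord M a b)
    (hP : ∀ p ∈ P, p ∉ interior (convexHull ℝ (P : Set ℂ))) (hM : M ⊆ P) (hx : x ∈ M) (hy : y ∈ M)
    (hxy : π.SameBlock x y) (hax : 0 ≤ orient a b x) (hay : orient a b y ≤ 0) :
    π.SameBlock a x := by
  obtain ⟨w, hwxy, haw⟩ := exists_mem_segment_eq_zero (orient a b) hax hay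
  have hw : w ∈ convexHull ℝ (P : Set ℂ) :=
    segment_subset_convexHull (mem_coe.2 (hM hx)) (mem_coe.2 (hM hy)) hwxy
  exact sameBlock_of_mem_segment h.sameBlock hxy (h.mem_segment hP hM hw haw) hwxy

lemma mem_convexHull_of_orient_nonneg (h : π.IsCuttingChord M a b)
    (hP : ∀ p ∈ P, p ∉ interior (convexHull ℝ (P : Set ℂ))) (hM : M ⊆ P) {N T : Finset ℂ}
    (ha : a ∈ N) (hb : b ∈ N) (hT : ∀ y ∈ T, orient a b y ≤ 0) (hNTP : N ∪ T ⊆ P)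
    (hw : w ∈ convexHull ℝ ((N ∪ T : Finset ℂ) : Set ℂ)) (haw : 0 ≤ orient a b w) :
    w ∈ convexHull ℝ (N : Set ℂ) := by
  have hNTP' : convexHull ℝ ((N ∪ T : Finset ℂ) : Set ℂ) ⊆ convexHull ℝ (P : Set ℂ) :=
    convexHull_mono (coe_subset.2 hNTP)
  rw [coe_union] at hw hNTP'
  refine mem_convexHull_of_mem_convexHull_union (orient a b) ⟨a, ha⟩ hT (fun u hu hau => ?_) hw haw
  exact segment_subset_convexHull (mem_coe.2 ha) (mem_coe.2 hb)
    (h.mem_segment hP hM (hNTP' hu) hau)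

lemma isSplitting (h : π.IsCuttingChord M a b)
    (hP : ∀ p ∈ P, p ∉ interior (convexHull ℝ (P : Set ℂ))) (hM : M ⊆ P)
    (hS : π.IsSplitting {x ∈ M | 0 ≤ orient a b x} S) (haS : a ∉ S) : π.IsSplitting M S := by
  set N : Finset ℂ := {x ∈ M | 0 ≤ orient a b x}
  set T : Finset ℂ := {x ∈ M | orient a b x ≤ 0}
  have hNM : N ⊆ M := filter_subset _ _
  have haN : a ∈ N := mem_filter.2 ⟨h.left_mem, by simp⟩
  have hbN : b ∈ N := mem_filter.2 ⟨h.right_mem, by simp⟩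
  have hbS : b ∉ S := fun hb => haS (hS.mem_of_sameBlock b hb a haN h.sameBlock.symm)
  have hMS : M \ S ⊆ (N \ S) ∪ T := by
    intro x hx
    obtain ⟨hxM, hxS⟩ := mem_sdiff.1 hx
    exact (le_total 0 (orient a b x)).elim
      (fun hax => mem_union_left _ (mem_sdiff.2 ⟨mem_filter.2 ⟨hxM, hax⟩, hxS⟩))
      (fun hax => mem_union_right _ (mem_filter.2 ⟨hxM, hax⟩))
  refine ⟨hS.subset.trans hNM, hS.nonempty,
    hS.nonempty_sdiff.mono (sdiff_subset_sdiff hNM subset_rfl), ?_, ?_⟩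
  · refine Set.disjoint_left.2 fun u huS huMS => Set.disjoint_left.1 hS.disjoint huS ?_
    have hau : 0 ≤ orient a b u :=
      convexHull_min (fun x hx => (mem_filter.1 (hS.subset hx)).2)
        ((convex_Ici (0 : ℝ)).affine_preimage (orient a b)) huS
    exact h.mem_convexHull_of_orient_nonneg hP hM (mem_sdiff.2 ⟨haN, haS⟩)
      (mem_sdiff.2 ⟨hbN, hbS⟩) (fun y hy => (mem_filter.1 hy).2)
      ((union_subset (sdiff_subset.trans hNM) (filter_subset _ _)).trans hM)
      (convexHull_mono (coe_subset.2 hMS) huMS) hau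
  · intro x hx y hy hxy
    obtain ⟨hxM, hax⟩ := mem_filter.1 (hS.subset hx)
    obtain hay | hay := le_total 0 (orient a b y)
    · exact hS.mem_of_sameBlock x hx y (mem_filter.2 ⟨hy, hay⟩) hxy
    · exact absurd (hS.mem_of_sameBlock x hx a haN
        (h.sameBlock_of_orient hP hM hxM hy hxy hax hay).symm) haS

lemma exists_isSplitting (h : π.IsCuttingChord M a b)
    (hP : ∀ p ∈ P, p ∉ interior (convexHull ℝ (P : Set ℂ))) (hM : M ⊆ P)
    (ih : ∀ N ⊂ M, (∃ x ∈ N, ∃ y ∈ N, ¬ π.SameBlock x y) → ∃ S, π.IsSplitting N S)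
    (hx : x ∈ M) (hax : ¬ π.SameBlock a x) (hxpos : 0 ≤ orient a b x) :
    ∃ S, π.IsSplitting M S := by
  obtain ⟨z, hz, haz⟩ := h.exists_neg
  have hss : {y ∈ M | 0 ≤ orient a b y} ⊂ M := filter_ssubset.2 ⟨z, hz, haz.not_ge⟩
  have haN : a ∈ ({y ∈ M | 0 ≤ orient a b y} : Finset ℂ) := mem_filter.2 ⟨h.left_mem, by simp⟩
  obtain ⟨S, hS⟩ := ih _ hss ⟨a, haN, x, mem_filter.2 ⟨hx, hxpos⟩, hax⟩
  by_cases haS : a ∈ S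
  · exact ⟨_, h.isSplitting hP hM hS.compl fun ha => (mem_sdiff.1 ha).2 haS⟩
  · exact ⟨S, h.isSplitting hP hM hS haS⟩

end IsCuttingChord

lemma orient_nonneg_of_forall_not_isCuttingChord (hno : ∀ a b, ¬ π.IsCuttingChord M a b)
    (ha : a ∈ M) (hb : b ∈ M) (hab : π.SameBlock a b) (hx : x ∈ M) (hpos : 0 < orient a b x)
    (hy : y ∈ M) : 0 ≤ orient a b y := by
  by_contra! hneg
  exact hno a b ⟨ha, hb, hab, ⟨x, hx, hpos⟩, ⟨y, hy, hneg⟩⟩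

-- As no side of the triangle `a`, `b`, `c` is a cutting chord, the triangle contains all of `M`.
lemma sameBlock_of_orient_pos (hno : ∀ a b, ¬ π.IsCuttingChord M a b) (hM : M ⊆ P) (ha : a ∈ M)
    (hb : b ∈ M) (hc : c ∈ M) (hab : π.SameBlock a b) (hac : π.SameBlock a c)
    (habc : 0 < orient a b c) (hx : x ∈ M) : π.SameBlock a x := by
  have hbca : 0 < orient b c a := by rwa [orient_rotate]
  have hcab : 0 < orient c a b := by rwa [orient_rotate]
  obtain ⟨B, hB, haB, hbB⟩ := hab
  obtain ⟨B', hB', haB', hcB⟩ := hac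
  obtain ⟨C, hC, hxC⟩ := π.1.exists_mem (hM hx)
  rw [π.1.eq_of_mem_parts hB' hB haB' haB] at hcB
  have hxB : x ∈ convexHull ℝ (B : Set ℂ) :=
    mem_of_orient_nonneg (convex_convexHull ℝ _) (subset_convexHull ℝ _ haB)
      (subset_convexHull ℝ _ hbB) (subset_convexHull ℝ _ hcB) habc
      (orient_nonneg_of_forall_not_isCuttingChord hno ha hb ⟨B, hB, haB, hbB⟩ hc habc hx)
      (orient_nonneg_of_forall_not_isCuttingChord hno hb hc ⟨B, hB, hbB, hcB⟩ ha hbca hx)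
      (orient_nonneg_of_forall_not_isCuttingChord hno hc ha ⟨B, hB, hcB, haB⟩ hb hcab hx)
  exact sameBlock_of_mem_convexHull hB hC hxB (subset_convexHull ℝ _ hxC) haB hxC

lemma orient_eq_zero_of_forall_not_isCuttingChord (hno : ∀ a b, ¬ π.IsCuttingChord M a b)
    (hM : M ⊆ P) (ha : a ∈ M) (hb : b ∈ M) (hc : c ∈ M) (hab : π.SameBlock a b)
    (hac : π.SameBlock a c) (hx : x ∈ M) (hax : ¬ π.SameBlock a x) : orient a b c = 0 := by
  obtain h | h | h := lt_trichotomy (orient a b c) 0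
  · rw [← neg_pos, ← orient_swap] at h
    exact absurd (hab.trans (sameBlock_of_orient_pos hno hM hb ha hc hab.symm
      (hab.symm.trans hac) h hx)) hax
  · exact h
  · exact absurd (sameBlock_of_orient_pos hno hM ha hb hc hab hac h hx) hax

lemma isExtreme_convexHull_inter_line (hno : ∀ a b, ¬ π.IsCuttingChord M a b)
    (ha : a ∈ (convexHull ℝ (M : Set ℂ)).extremePoints ℝ) (hb : b ∈ M) (hab : π.SameBlock a b) :
    IsExtreme ℝ (convexHull ℝ (M : Set ℂ)) (convexHull ℝ (M : Set ℂ) ∩ line[ℝ, a, b]) := by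
  obtain rfl | hne := eq_or_ne a b
  · rw [Set.pair_eq_singleton, AffineSubspace.coe_affineSpan_singleton,
      Set.inter_eq_right.2 (Set.singleton_subset_iff.2 ha.1)]
    exact isExtreme_singleton.2 ha
  have hface {c d : ℂ} (hcd : c ≠ d) (h : ∀ y ∈ M, 0 ≤ orient c d y) :
      IsExtreme ℝ (convexHull ℝ (M : Set ℂ)) (convexHull ℝ (M : Set ℂ) ∩ line[ℝ, c, d]) :=
    isExtreme_inter_line hcd
      (convexHull_min h ((convex_Ici (0 : ℝ)).affine_preimage (orient c d)))
  by_cases hpos : ∃ x ∈ M, 0 < orient a b x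
  · obtain ⟨x, hx, hax⟩ := hpos
    exact hface hne fun y => orient_nonneg_of_forall_not_isCuttingChord hno
      (extremePoints_convexHull_subset ha) hb hab hx hax
  · push Not at hpos
    rw [Set.pair_comm]
    exact hface hne.symm fun y hy => by
      rw [orient_swap, neg_nonneg]
      exact hpos y hy

lemma mem_segment_iff_sameBlock (hno : ∀ a b, ¬ π.IsCuttingChord M a b) (hM : M ⊆ P)
    (ha : a ∈ (convexHull ℝ (M : Set ℂ)).extremePoints ℝ) (hb : b ∈ M) (hab : π.SameBlock a b)
    (hmax : ∀ c ∈ M, π.SameBlock a c → dist c a ≤ dist b a) (hx : x ∈ M)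
    (hax : ¬ π.SameBlock a x) (hc : c ∈ M) : c ∈ segment ℝ a b ↔ π.SameBlock a c := by
  refine ⟨fun hseg => sameBlock_of_mem_segment hab (sameBlock_refl (hM hc)) hseg
    (left_mem_segment ℝ c c), fun hac => ?_⟩
  have hcK : c ∈ convexHull ℝ (M : Set ℂ) := subset_convexHull ℝ _ hc
  obtain rfl | hne := eq_or_ne a b
  · rw [dist_le_zero.1 ((hmax c hc hac).trans_eq (dist_self a))]
    exact left_mem_segment ℝ a a
  · have hline : c ∈ line[ℝ, a, b] := mem_line_of_orient_eq_zero hne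
      (orient_eq_zero_of_forall_not_isCuttingChord hno hM (extremePoints_convexHull_subset ha)
        hb hc hab hac hx hax)
    exact mem_segment_of_dist_le ha (subset_convexHull ℝ _ hb) hcK hline (hmax c hc hac)

lemma exists_isSplitting_of_forall_not_isCuttingChord (hno : ∀ a b, ¬ π.IsCuttingChord M a b)
    (hM : M ⊆ P) (hxy : ∃ x ∈ M, ∃ y ∈ M, ¬ π.SameBlock x y) : ∃ S, π.IsSplitting M S := by
  classical
  obtain ⟨x, hx, y, hy, hxy⟩ := hxy
  obtain ⟨v, hv⟩ : ((convexHull ℝ (M : Set ℂ)).extremePoints ℝ).Nonempty :=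
    (M.finite_toSet.isCompact_convexHull ℝ).extremePoints_nonempty ⟨x, subset_convexHull ℝ _ hx⟩
  have hvM : v ∈ M := extremePoints_convexHull_subset hv
  obtain ⟨z, hz, hvz⟩ : ∃ z ∈ M, ¬ π.SameBlock v z := by
    by_contra! h
    exact hxy ((h x hx).symm.trans (h y hy))
  have hvS : v ∈ ({c ∈ M | π.SameBlock v c} : Finset ℂ) :=
    mem_filter.2 ⟨hvM, sameBlock_refl (hM hvM)⟩
  obtain ⟨b, hbS, hmax⟩ := exists_max_image _ (dist · v) ⟨v, hvS⟩
  obtain ⟨hb, hvb⟩ := mem_filter.1 hbS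
  have hseg {c : ℂ} (hc : c ∈ M) : c ∈ segment ℝ v b ↔ π.SameBlock v c :=
    mem_segment_iff_sameBlock hno hM hv hb hvb
      (fun c hc hvc => hmax c (mem_filter.2 ⟨hc, hvc⟩)) hz hvz hc
  refine ⟨{c ∈ M | π.SameBlock v c}, filter_subset _ _, ⟨v, hvS⟩,
    ⟨z, mem_sdiff.2 ⟨hz, fun h => hvz (mem_filter.1 h).2⟩⟩, ?_, ?_⟩
  · refine Set.disjoint_sdiff_right.mono (convexHull_min (fun c hc => ?_) (convex_segment v b))
      (convexHull_min (fun c hc => ?_) (convex_sdiff_segment (convex_convexHull ℝ (M : Set ℂ)) hv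
        (subset_convexHull ℝ _ hb) (isExtreme_convexHull_inter_line hno hv hb hvb)))
    · obtain ⟨hcM, hvc⟩ := mem_filter.1 hc
      exact (hseg hcM).2 hvc
    · obtain ⟨hcM, hcS⟩ := mem_sdiff.1 hc
      exact ⟨subset_convexHull ℝ _ hcM,
        fun h => hcS (mem_filter.2 ⟨hcM, (hseg hcM).1 h⟩)⟩
  · intro c hc d hd hcd
    exact mem_filter.2 ⟨hd, (mem_filter.1 hc).2.trans hcd⟩

theorem exists_isSplitting (hP : ∀ p ∈ P, p ∉ interior (convexHull ℝ (P : Set ℂ))) (hM : M ⊆ P)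
    (hxy : ∃ x ∈ M, ∃ y ∈ M, ¬ π.SameBlock x y) : ∃ S, π.IsSplitting M S := by
  induction M using Finset.strongInduction with
  | H M ih =>
    by_cases hno : ∀ a b, ¬ π.IsCuttingChord M a b
    · exact exists_isSplitting_of_forall_not_isCuttingChord hno hM hxy
    push Not at hno
    obtain ⟨a, b, h⟩ := hno
    obtain ⟨x, hx, hax⟩ : ∃ x ∈ M, ¬ π.SameBlock a x := by
      by_contra! hall
      obtain ⟨x, hx, y, hy, hxy⟩ := hxy
      exact hxy ((hall x hx).symm.trans (hall y hy))
    have ih' : ∀ N ⊂ M, (∃ x ∈ N, ∃ y ∈ N, ¬ π.SameBlock x y) → ∃ S, π.IsSplitting N S :=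
      fun N hN => ih N hN (hN.subset.trans hM)
    obtain hpos | hneg := le_total 0 (orient a b x)
    · exact h.exists_isSplitting hP hM ih' hx hax hpos
    · refine h.symm.exists_isSplitting hP hM ih' hx (fun hbx => hax (h.sameBlock.trans hbx)) ?_
      rwa [orient_swap, neg_nonneg]

lemma exists_not_sameBlock_of_lt (h : π < μ) :
    ∃ M ∈ μ.parts, ∃ x ∈ M, ∃ y ∈ M, ¬ π.SameBlock x y := by
  by_contra! hall
  refine h.not_ge fun M hM => ?_
  obtain ⟨x, hx⟩ := μ.1.nonempty_of_mem_parts hM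
  obtain ⟨B, hB, hxB⟩ := π.1.exists_mem (μ.1.le hM hx)
  refine ⟨B, hB, fun y hy => ?_⟩
  obtain ⟨C, hC, hxC, hyC⟩ := hall M hM x hx y hy
  rwa [π.1.eq_of_mem_parts hB hC hxB hxC]

namespace IsSplitting

lemma not_le (h : π.IsSplitting M S) (hM : M ∈ μ.parts) : ∀ d ∈ μ.parts, ¬ d ≤ S := by
  intro d hd hdS
  obtain ⟨x, hx⟩ := μ.1.nonempty_of_mem_parts hd
  obtain ⟨y, hy⟩ := h.nonempty_sdiff
  obtain ⟨hyM, hyS⟩ := mem_sdiff.1 hy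
  rw [μ.1.eq_of_mem_parts hd hM hx (h.subset (hdS hx))] at hdS
  exact hyS (hdS hyM)

lemma le_or_disjoint (h : π.IsSplitting M S) (hπμ : π ≤ μ) (hM : M ∈ μ.parts) :
    ∀ B ∈ π.parts, B ≤ S ∨ Disjoint B S := by
  intro B hB
  rw [or_iff_not_imp_right, not_disjoint_iff]
  rintro ⟨x, hxB, hxS⟩ y hyB
  obtain ⟨D, hD, hBD⟩ := hπμ hB
  rw [μ.1.eq_of_mem_parts hD hM (hBD hxB) (h.subset hxS)] at hBD
  exact h.mem_of_sameBlock x hxS y (hBD hyB) ⟨B, hB, hxB, hyB⟩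

lemma isNoncrossing_carve (h : π.IsSplitting M S) (hM : M ∈ μ.parts) (hS : S ≠ ⊥) (hSP : S ≤ P) :
    IsNoncrossing (carve μ.1 hS hSP) := by
  have hnew : ∀ D ∈ μ.parts, Disjoint (convexHull ℝ (S : Set ℂ))
      (convexHull ℝ ((D \ S : Finset ℂ) : Set ℂ)) := by
    intro D hD
    obtain rfl | hne := eq_or_ne M D
    · exact h.disjoint
    · exact (μ.2 hM hD hne).mono (convexHull_mono (coe_subset.2 h.subset))
        (convexHull_mono (coe_subset.2 sdiff_subset))
  intro B hB C hC hne
  obtain rfl | ⟨D, hD, -, rfl⟩ := mem_parts_carve.1 hB <;>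
    obtain rfl | ⟨E, hE, -, rfl⟩ := mem_parts_carve.1 hC
  · exact absurd rfl hne
  · exact hnew E hE
  · exact (hnew D hD).symm
  · exact (μ.2 hD hE fun hDE => hne (hDE ▸ rfl)).mono
      (convexHull_mono (coe_subset.2 sdiff_subset)) (convexHull_mono (coe_subset.2 sdiff_subset))

end IsSplitting

end NC

/-- If every point of `P` lies on the boundary of a convex polygon (equivalently, on the
frontier of the convex hull of `P`), then whenever `μ` covers `π` in `NC(P)`, the number
of blocks of `μ` is one less than the number of blocks of `π`; consequently
`ρ(π) = |P| - #blocks(π)` is a rank function and `NC(P)` is graded. -/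
theorem nc_covBy_card_parts (P : Finset ℂ)
    (hP : ∀ p ∈ P, p ∈ frontier (convexHull ℝ (P : Set ℂ)))
    (π μ : NC P) (h : π ⋖ μ) :
    π.parts.card = μ.parts.card + 1 := by
  have hP' : ∀ p ∈ P, p ∉ interior (convexHull ℝ (P : Set ℂ)) := fun p hp => (hP p hp).2
  obtain ⟨M, hM, hxy⟩ := NC.exists_not_sameBlock_of_lt h.lt
  have hMP : M ⊆ P := μ.1.le hM
  obtain ⟨S, hS⟩ := NC.exists_isSplitting hP' hMP hxy
  have hne : S ≠ ⊥ := hS.nonempty.ne_empty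
  have hSP : S ≤ P := hS.subset.trans hMP
  let η : NC P := ⟨carve μ.1 hne hSP, hS.isNoncrossing_carve hM hne hSP⟩
  have hcard : #η.parts = #μ.parts + 1 := card_parts_carve hne hSP (hS.not_le hM)
  have hπη : π ≤ η := le_carve hne hSP h.le (hS.le_or_disjoint h.le hM)
  have hημ : η ≤ μ := carve_le hne hSP hM hS.subset
  obtain hη | hη := h.eq_or_eq hπη hημ
  · rw [← hη, hcard]
  · exact absurd hcard (by simp [hη])
end

section
/- Let n ≥ 2 and let T_n = {1, 2, …, n} ∪ {i} ⊆ ℂ, writing x_k = k for 1 ≤ k ≤ n and y = i. Let A be the subposet of NC(T_n) consisting of all noncrossing partitions in which x_n is either a singleton block or lies in the same block as x_{n−1}, and let B be the subposet consisting of all noncrossing partitions in which {x_n, y} is a block. Then: (1) A is order-isomorphic to the direct product of NC(T_{n−1}) with a two-element chain; (2) B is order-isomorphic to the Boolean lattice of all subsets of an (n−2)-element set ordered by inclusion; and (3) NC(T_n) is the disjoint union of A and B. -/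
open Finset

/-- The configuration `T_n = {1, …, n} ∪ {i} ⊆ ℂ`: the points `x_k = k` for
`1 ≤ k ≤ n` together with `y = i`. -/
noncomputable def Tconfig (n : ℕ) : Finset ℂ :=
  ((Finset.Icc 1 n).image fun k : ℕ => (k : ℂ)) ∪ {Complex.I}

/-- `x_n` is a singleton block or lies in the same block as `x_{n-1}`. -/
def TcondA (n : ℕ) (μ : NC (Tconfig n)) : Prop :=
  ({((n : ℕ) : ℂ)} : Finset ℂ) ∈ μ.parts ∨ μ.SameBlock (((n - 1 : ℕ) : ℂ)) ((n : ℂ))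

/-- `{x_n, y}` is a block. -/
def TcondB (n : ℕ) (μ : NC (Tconfig n)) : Prop :=
  ({((n : ℕ) : ℂ), Complex.I} : Finset ℂ) ∈ μ.parts

/-!
Label the points on the line by `Fin n` and the apex `i` by `none`. The hull of a block without the
apex lies on the line, and every hull meets the line only between real points of its block. As just
one block contains the apex, a partition of `T_n` is noncrossing if and only if its trace on the
line is an interval partition, no matter which interval, if any, the apex joins.

Unless `x_n` shares the block of `x_{n-1}`, convexity leaves it alone on the line, so its block is
`{x_n}` or `{x_n, y}`. In condition `A`, the restriction to the other points and the bit telling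
whether `x_n` is linked to `x_{n-1}` can be chosen independently. In condition `B`, what remains is
an interval partition of `n - 1` points on the line, hence a subset of their `n - 2` links.
-/

section OrderIsos

variable {A B C D : Type*} [LE A] [LE B] [LE C] [LE D]

/-- The order isomorphism between subtypes induced by an order isomorphism. -/
def orderIsoSubtypeCongr (e : A ≃o B) {S : A → Prop} {T : B → Prop} (h : ∀ a, S a ↔ T (e a)) :
    {a // S a} ≃o {b // T b} where
  toEquiv := e.toEquiv.subtypeEquiv h
  map_rel_iff' := e.map_rel_iff

/-- The order isomorphism between products induced by order isomorphisms of the factors. -/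
def orderIsoProdCongr (e : A ≃o B) (f : C ≃o D) : A × C ≃o B × D where
  toEquiv := e.toEquiv.prodCongr f.toEquiv
  map_rel_iff' := and_congr e.map_rel_iff f.map_rel_iff

end OrderIsos

section IntervalSetoids

variable {α β : Type*}

/-- An *interval setoid* on an ordered type is an equivalence relation whose classes are
order-convex. -/
def IsIntervalSetoid [Preorder α] (s : Setoid α) : Prop :=
  ∀ ⦃a b c⦄, a ≤ b → b ≤ c → s a c → s a b

namespace IsIntervalSetoid

lemma ker_of_monotone [Preorder α] [PartialOrder β] {f : α → β} (hf : Monotone f) :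
    IsIntervalSetoid (Setoid.ker f) := fun _ _ _ hab hbc hac =>
  (hf hab).antisymm ((hf hbc).trans (Setoid.ker_def.mp hac).ge)

lemma comap [Preorder α] [Preorder β] {s : Setoid β} (hs : IsIntervalSetoid s) {f : α → β}
    (hf : Monotone f) : IsIntervalSetoid (Setoid.comap f s) :=
  fun _ _ _ hab hbc hac => hs (hf hab) (hf hbc) hac

lemma inf [Preorder α] {s t : Setoid α} (hs : IsIntervalSetoid s) (ht : IsIntervalSetoid t) :
    IsIntervalSetoid (s ⊓ t) :=
  fun _ _ _ hab hbc hac => ⟨hs hab hbc hac.1, ht hab hbc hac.2⟩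

lemma le_of_links_le {m : ℕ} {s t : Setoid (Fin (m + 1))} (hs : IsIntervalSetoid s)
    (hst : ∀ i : Fin m, s i.castSucc i.succ → t i.castSucc i.succ) : s ≤ t := by
  have of_le (b : Fin (m + 1)) : ∀ a ≤ b, s a b → t a b := by
    induction b using Fin.induction with
    | zero =>
      intro a ha _
      rw [Fin.le_zero_iff.mp ha]
    | succ i ih =>
      intro a ha hai
      rcases ha.eq_or_lt with rfl | ha
      · exact t.refl' _
      have hac : a ≤ i.castSucc := Fin.le_castSucc_iff.mpr ha
      have h : s a i.castSucc := hs hac i.castSucc_lt_succ.le hai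
      exact t.trans' (ih a hac h) (hst i (s.trans' (s.symm' h) hai))
  intro a b hab
  rcases le_total a b with h | h
  · exact of_le b a h hab
  · exact t.symm' (of_le a b h (s.symm' hab))

end IsIntervalSetoid

-- The class of a point is recorded by the set of missing links to its left.
lemma exists_isIntervalSetoid_links {m : ℕ} (S : Set (Fin m)) :
    ∃ s : Setoid (Fin (m + 1)), IsIntervalSetoid s ∧
      ∀ i : Fin m, s i.castSucc i.succ ↔ i ∈ S := by
  let breaksBefore (a : Fin (m + 1)) : Set (Fin m) := {i | i ∉ S ∧ i.castSucc < a}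
  have breaksBefore_mono : Monotone breaksBefore :=
    fun _ _ hab _ hi => ⟨hi.1, hi.2.trans_le hab⟩
  refine ⟨Setoid.ker breaksBefore, .ker_of_monotone breaksBefore_mono, fun i => ?_⟩
  rw [Setoid.ker_def]
  constructor
  · intro h
    by_contra hi
    have hmem : i ∈ breaksBefore i.castSucc := h ▸ ⟨hi, i.castSucc_lt_succ⟩
    exact lt_irrefl _ hmem.2
  · intro hi
    ext j
    refine and_congr_right fun hj => ?_
    have hji : j ≠ i := fun h => hj (h ▸ hi)
    rw [Fin.castSucc_lt_castSucc_iff, Fin.castSucc_lt_succ_iff, le_iff_lt_or_eq, or_iff_left hji]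

open Classical in
/-- Interval partitions of a chain with `m + 1` points form a Boolean lattice: such a partition is
determined by the set of links `i ~ i + 1` which it contains. -/
noncomputable def intervalSetoidOrderIso (m : ℕ) :
    {s : Setoid (Fin (m + 1)) // IsIntervalSetoid s} ≃o Finset (Fin m) :=
  OrderIso.ofSurjective
    (OrderEmbedding.ofMapLEIff (fun s => ({i | s.1 i.castSucc i.succ} : Finset (Fin m)))
      fun s t => by
        constructor
        · intro h
          exact s.2.le_of_links_le fun i hi => by simpa using h (by simpa using hi)
        · intro h i hi
          simpa using h (by simpa using hi))
    fun S => by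
      obtain ⟨s, hs, hlinks⟩ := exists_isIntervalSetoid_links (S : Set (Fin m))
      exact ⟨⟨s, hs⟩, by ext i; simp [hlinks]⟩

end IntervalSetoids

section Retraction

variable {X Y : Type*} {f : Y → X} {ρ : X → Y} {Z : Set X}

/-- The pullback of an equivalence relation along `ρ`, with the points of `Z` separated from the
remaining ones. When `ρ` retracts `X` onto `Y` and collapses `Z` to a point, this is the extension
of a partition of `Y` to `X` in which `Z` becomes a block. -/
def comapSeparating (ρ : X → Y) (Z : Set X) (s : Setoid Y) : Setoid X :=
  Setoid.comap ρ s ⊓ Setoid.ker (· ∈ Z)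

lemma comapSeparating_iff {s : Setoid Y} {x x' : X} :
    comapSeparating ρ Z s x x' ↔ s (ρ x) (ρ x') ∧ (x ∈ Z ↔ x' ∈ Z) := by
  rw [comapSeparating, Setoid.inf_iff_and, Setoid.comap_rel, Setoid.ker_def, eq_iff_iff]

lemma comapSeparating_mono : Monotone (comapSeparating ρ Z) :=
  fun _ _ h => inf_le_inf_right _ fun _ _ hxx' => h hxx'

lemma comap_comapSeparating (hρ : Function.LeftInverse ρ f) (hf : ∀ y, f y ∉ Z) (s : Setoid Y) :
    Setoid.comap f (comapSeparating ρ Z s) = s := by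
  ext y y'
  simp only [Setoid.comap_rel, comapSeparating_iff, hρ _, hf, and_true]

lemma comapSeparating_comap {r : Setoid X} (hr : ∀ x ∉ Z, r x (f (ρ x)))
    (hρ : ∀ x ∈ Z, ∀ x' ∈ Z, ρ x = ρ x') (hZ : ∀ x ∈ Z, ∀ x', r x x' ↔ x' ∈ Z) :
    comapSeparating ρ Z (Setoid.comap f r) = r := by
  ext x x'
  rw [comapSeparating_iff, Setoid.comap_rel]
  by_cases hx : x ∈ Z
  · rw [hZ x hx]
    constructor
    · exact fun h => h.2.mp hx
    · intro hx'
      rw [hρ x hx x' hx']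
      exact ⟨r.refl' _, iff_of_true hx hx'⟩
  · by_cases hx' : x' ∈ Z
    · simp only [hx, hx', false_iff, not_true_eq_false, and_false]
      exact fun h => hx ((hZ x' hx' x).mp (r.symm' h))
    · simp only [hx, hx', and_true]
      exact ⟨fun h => r.trans' (hr x hx) (r.trans' h (r.symm' (hr x' hx'))),
        fun h => r.trans' (r.symm' (hr x hx)) (r.trans' h (hr x' hx'))⟩

lemma mem_classes_comapSeparating {s : Setoid Y} (hρ : ∀ x ∈ Z, ∀ x' ∈ Z, ρ x = ρ x')
    (hZ : Z.Nonempty) : Z ∈ (comapSeparating ρ Z s).classes := by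
  obtain ⟨z, hz⟩ := hZ
  refine ⟨z, Set.ext fun x => ?_⟩
  rw [Set.mem_ofPred_eq, comapSeparating_iff, iff_true_right hz]
  exact ⟨fun hx => ⟨hρ x hx z hz ▸ s.refl' _, hx⟩, fun h => h.2⟩

lemma IsIntervalSetoid.comapSeparating [Preorder X] [Preorder Y] {s : Setoid Y}
    (hs : IsIntervalSetoid s) (hρ : Monotone ρ) (hZ : IsUpperSet Z) :
    IsIntervalSetoid (comapSeparating ρ Z s) :=
  (hs.comap hρ).inf (.ker_of_monotone (Set.monotone_mem.mpr hZ))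

lemma rel_iff_mem_of_mem_classes {r : Setoid X} (hZ : Z ∈ r.classes) {x : X} (hx : x ∈ Z) (x' : X) :
    r x x' ↔ x' ∈ Z := by
  obtain ⟨z, rfl⟩ := hZ
  exact ⟨fun h => r.trans' (r.symm' h) hx, fun h => r.trans' hx (r.symm' h)⟩

end Retraction

section ConvexHull

lemma mem_convexHull_face {E : Type*} [AddCommGroup E] [Module ℝ E] {g : E →ₗ[ℝ] ℝ} {C : Set E}
    (hg : ∀ c ∈ C, 0 ≤ g c) {z : E} (hz : z ∈ convexHull ℝ C) (hgz : g z = 0) :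
    z ∈ convexHull ℝ {c ∈ C | g c = 0} := by
  have hconvex : Convex ℝ {w | 0 ≤ g w ∧ (g w = 0 → w ∈ convexHull ℝ {c ∈ C | g c = 0})} := by
    rw [convex_iff_forall_pos]
    rintro v ⟨hv, hv'⟩ w ⟨hw, hw'⟩ a b ha hb hab
    have hav : 0 ≤ a * g v := mul_nonneg ha.le hv
    have hbw : 0 ≤ b * g w := mul_nonneg hb.le hw
    simp only [Set.mem_ofPred_eq, map_add, map_smul, smul_eq_mul]
    refine ⟨add_nonneg hav hbw, fun h => ?_⟩
    obtain ⟨hv0, hw0⟩ := (add_eq_zero_iff_of_nonneg hav hbw).mp h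
    exact convex_convexHull ℝ _ (hv' ((mul_eq_zero_iff_left ha.ne').mp hv0))
      (hw' ((mul_eq_zero_iff_left hb.ne').mp hw0)) ha.le hb.le hab
  have hC : C ⊆ {w | 0 ≤ g w ∧ (g w = 0 → w ∈ convexHull ℝ {c ∈ C | g c = 0})} :=
    fun c hc => ⟨hg c hc, fun h => subset_convexHull ℝ {c ∈ C | g c = 0} ⟨hc, h⟩⟩
  exact (convexHull_min hC hconvex hz).2 hgz

lemma exists_re_le_and_exists_le_re_of_mem_convexHull {C : Set ℂ} (hC : ∀ c ∈ C, 0 ≤ c.im) {z : ℂ}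
    (hz : z ∈ convexHull ℝ C) (hz0 : z.im = 0) :
    (∃ c ∈ C, c.im = 0 ∧ c.re ≤ z.re) ∧ ∃ c ∈ C, c.im = 0 ∧ z.re ≤ c.re := by
  have hface : z ∈ convexHull ℝ {c ∈ C | c.im = 0} :=
    mem_convexHull_face (g := Complex.imLm) hC hz hz0
  obtain ⟨c, hc, hcz⟩ := (Complex.reLm.concaveOn convex_univ).exists_le_of_mem_convexHull
    (Set.subset_univ _) hface
  obtain ⟨c', hc', hzc'⟩ := (Complex.reLm.convexOn convex_univ).exists_ge_of_mem_convexHull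
    (Set.subset_univ _) hface
  exact ⟨⟨c, hc.1, hc.2, hcz⟩, c', hc'.1, hc'.2, hzc'⟩

lemma ofReal_mem_segment {a b c : ℝ} (hab : a ≤ b) (hbc : b ≤ c) :
    (b : ℂ) ∈ segment ℝ (a : ℂ) c := by
  have hb : b ∈ segment ℝ a c := by
    rw [segment_eq_Icc (hab.trans hbc)]
    exact ⟨hab, hbc⟩
  have h := Set.mem_image_of_mem Complex.ofRealLI.toLinearMap.toAffineMap hb
  rwa [image_segment] at h

end ConvexHull

section BlockSetoid

variable {ι E : Type*} {P : Finset E} {p : ι → E}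

lemma mem_of_coe_eq_range (hP : (P : Set E) = Set.range p) (i : ι) : p i ∈ P :=
  Finset.mem_coe.mp (hP ▸ Set.mem_range_self i)

lemma exists_label_of_mem (hP : (P : Set E) = Set.range p) {z : E} (hz : z ∈ P) : ∃ i, p i = z :=
  Set.mem_range.mp (hP ▸ Finset.mem_coe.mpr hz)

variable [DecidableEq E]

/-- The partition of the set of labels `ι` of the points `p i` which a finpartition induces. -/
def blockSetoid (p : ι → E) (π : Finpartition P) : Setoid ι :=
  Setoid.ker fun i => π.part (p i)

lemma blockSetoid_of_mem {π : Finpartition P} {B : Finset E} (hB : B ∈ π.parts) {i j : ι}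
    (hi : p i ∈ B) (hj : p j ∈ B) : blockSetoid p π i j :=
  (π.part_eq_of_mem hB hi).trans (π.part_eq_of_mem hB hj).symm

lemma eq_of_blockSetoid {π : Finpartition P} {B C : Finset E} (hB : B ∈ π.parts)
    (hC : C ∈ π.parts) {i j : ι} (hi : p i ∈ B) (hj : p j ∈ C) (hij : blockSetoid p π i j) :
    B = C :=
  (π.part_eq_of_mem hB hi).symm.trans (hij.trans (π.part_eq_of_mem hC hj))

variable (hP : (P : Set E) = Set.range p)
include hP

lemma mem_part_iff_blockSetoid (π : Finpartition P) {i j : ι} :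
    p i ∈ π.part (p j) ↔ blockSetoid p π i j :=
  π.mem_part_iff_part_eq_part (mem_of_coe_eq_range hP i) (mem_of_coe_eq_range hP j)

lemma blockSetoid_iff_exists (π : Finpartition P) {i j : ι} :
    blockSetoid p π i j ↔ ∃ B ∈ π.parts, p i ∈ B ∧ p j ∈ B := by
  rw [← mem_part_iff_blockSetoid hP, π.mem_part_iff_exists]

lemma blockSetoid_le_iff {π μ : Finpartition P} : blockSetoid p π ≤ blockSetoid p μ ↔ π ≤ μ := by
  constructor
  · intro h B hB
    obtain ⟨z, hz⟩ := π.nonempty_of_mem_parts hB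
    obtain ⟨i, rfl⟩ := exists_label_of_mem hP (π.le hB hz)
    refine ⟨μ.part (p i), μ.part_mem.mpr (mem_of_coe_eq_range hP i), fun w hw => ?_⟩
    obtain ⟨j, rfl⟩ := exists_label_of_mem hP (π.le hB hw)
    exact (mem_part_iff_blockSetoid hP μ).mpr (h (blockSetoid_of_mem hB hw hz))
  · intro h i j hij
    obtain ⟨B, hB, hi, hj⟩ := (blockSetoid_iff_exists hP π).mp hij
    obtain ⟨C, hC, hBC⟩ := h hB
    exact blockSetoid_of_mem hC (hBC hi) (hBC hj)

lemma blockSetoid_surjective (hp : Function.Injective p) :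
    Function.Surjective (blockSetoid p : Finpartition P → Setoid ι) := by
  classical
  intro r
  obtain ⟨s, rfl⟩ := Setoid.comap_surjective p hp r
  refine ⟨Finpartition.ofSetSetoid s P, ?_⟩
  ext i j
  rw [← mem_part_iff_blockSetoid hP, Finpartition.mem_part_ofSetSetoid_iff_rel, Setoid.comap_rel]
  exact ⟨fun h => s.symm' h.2.2,
    fun h => ⟨mem_of_coe_eq_range hP j, mem_of_coe_eq_range hP i, s.symm' h⟩⟩

/-- Finpartitions of a set of points correspond to equivalence relations on their labels. -/
noncomputable def blockSetoidOrderIso (hp : Function.Injective p) : Finpartition P ≃o Setoid ι :=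
  OrderIso.ofSurjective
    (OrderEmbedding.ofMapLEIff (blockSetoid p) fun _ _ => blockSetoid_le_iff hP)
    (blockSetoid_surjective hP hp)

lemma mem_parts_iff_mem_classes (hp : Function.Injective p) (π : Finpartition P) {T : Finset E}
    {Z : Set ι} (hT : (T : Set E) = p '' Z) : T ∈ π.parts ↔ Z ∈ (blockSetoid p π).classes := by
  have mem_T (i : ι) : p i ∈ T ↔ i ∈ Z := by
    rw [← Finset.mem_coe, hT, hp.mem_set_image]
  constructor
  · intro h
    obtain ⟨z, hz⟩ := π.nonempty_of_mem_parts h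
    obtain ⟨i, rfl⟩ := exists_label_of_mem hP (π.le h hz)
    refine ⟨i, Set.ext fun j => ?_⟩
    rw [← mem_T, Set.mem_ofPred_eq, ← mem_part_iff_blockSetoid hP, π.part_eq_of_mem h hz]
  · rintro ⟨i, rfl⟩
    suffices T = π.part (p i) from this ▸ π.part_mem.mpr (mem_of_coe_eq_range hP i)
    refine Finset.coe_injective (hT.trans (Set.Subset.antisymm ?_ fun z hz => ?_))
    · rintro _ ⟨j, hj, rfl⟩
      exact (mem_part_iff_blockSetoid hP π).mpr hj
    · obtain ⟨j, rfl⟩ := exists_label_of_mem hP (π.part_subset _ hz)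
      exact ⟨j, (mem_part_iff_blockSetoid hP π).mp hz, rfl⟩

end BlockSetoid

section Apex

variable {α : Type*}

/-- The points `x a` of the real axis together with the apex `i`, which gets the label `none`. -/
noncomputable def apexPoint (x : α → ℝ) : Option α → ℂ
  | none => Complex.I
  | some a => x a

variable {x : α → ℝ}

lemma apexPoint_injective (hx : Function.Injective x) : Function.Injective (apexPoint x) := by
  have I_ne (a : α) : Complex.I ≠ x a := fun h => by simpa using congrArg Complex.im h
  rintro (_ | a) (_ | b) h
  · rfl
  · exact absurd h (I_ne b)
  · exact absurd h.symm (I_ne a)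
  · exact congrArg some (hx (Complex.ofReal_injective h))

lemma exists_labels_around {B : Set ℂ} (hB : B ⊆ Set.range (apexPoint x)) {z : ℂ}
    (hz : z ∈ convexHull ℝ B) (hz0 : z.im = 0) :
    (∃ a, apexPoint x (some a) ∈ B ∧ x a ≤ z.re) ∧
      ∃ c, apexPoint x (some c) ∈ B ∧ z.re ≤ x c := by
  have im_nonneg : ∀ w ∈ B, 0 ≤ w.im := by
    intro w hw
    obtain ⟨_ | a, rfl⟩ := hB hw <;> simp [apexPoint]
  have exists_real_label : ∀ w ∈ B, w.im = 0 → ∃ a, apexPoint x (some a) = w ∧ x a = w.re := by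
    intro w hw hw0
    obtain ⟨_ | a, rfl⟩ := hB hw
    · simp [apexPoint] at hw0
    · exact ⟨a, rfl, rfl⟩
  obtain ⟨⟨w, hw, hw0, hwz⟩, w', hw', hw'0, hzw'⟩ :=
    exists_re_le_and_exists_le_re_of_mem_convexHull im_nonneg hz hz0
  obtain ⟨a, rfl, ha⟩ := exists_real_label w hw hw0
  obtain ⟨c, rfl, hc⟩ := exists_real_label w' hw' hw'0
  exact ⟨⟨a, hw, ha.trans_le hwz⟩, c, hw', hzw'.trans hc.ge⟩

variable {P : Finset ℂ}

lemma IsNoncrossing.isIntervalSetoid [Preorder α] (hx : Monotone x)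
    (hP : (P : Set ℂ) = Set.range (apexPoint x)) {π : Finpartition P} (hπ : IsNoncrossing π) :
    IsIntervalSetoid (Setoid.comap some (blockSetoid (apexPoint x) π)) := by
  intro a b c hab hbc hac
  obtain ⟨B, hB, ha, hc⟩ := (blockSetoid_iff_exists hP π).mp hac
  obtain ⟨C, hC, hb⟩ := π.exists_mem (mem_of_coe_eq_range hP (some b))
  have hbB : apexPoint x (some b) ∈ convexHull ℝ (B : Set ℂ) :=
    segment_subset_convexHull ha hc (ofReal_mem_segment (hx hab) (hx hbc))
  have hBC : B = C := by
    by_contra hne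
    exact (hπ hB hC hne).le_bot ⟨hbB, subset_convexHull ℝ _ hb⟩
  exact blockSetoid_of_mem hB ha (hBC ▸ hb)

variable [LinearOrder α]

lemma disjoint_convexHull_of_apex_notMem (hx : StrictMono x)
    (hP : (P : Set ℂ) = Set.range (apexPoint x)) {π : Finpartition P}
    (hπ : IsIntervalSetoid (Setoid.comap some (blockSetoid (apexPoint x) π)))
    {B C : Finset ℂ} (hB : B ∈ π.parts) (hC : C ∈ π.parts) (hBC : B ≠ C)
    (hI : Complex.I ∉ B) : Disjoint (convexHull ℝ (B : Set ℂ)) (convexHull ℝ (C : Set ℂ)) := by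
  have subset_range {D : Finset ℂ} (hD : D ∈ π.parts) : (D : Set ℂ) ⊆ Set.range (apexPoint x) :=
    hP ▸ Finset.coe_subset.mpr (π.le hD)
  have B_real : (B : Set ℂ) ⊆ Complex.imLm.ker := by
    intro w hw
    obtain ⟨_ | a, rfl⟩ := subset_range hB hw
    · exact absurd hw hI
    · exact Complex.ofReal_im (x a)
  rw [Set.disjoint_left]
  intro z hzB hzC
  have hz0 : z.im = 0 := convexHull_min B_real (Submodule.convex _) hzB
  obtain ⟨⟨a, ha, haz⟩, a', ha', hza'⟩ := exists_labels_around (subset_range hB) hzB hz0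
  obtain ⟨⟨c, hc, hcz⟩, c', hc', hzc'⟩ := exists_labels_around (subset_range hC) hzC hz0
  rcases le_total a c with hac | hca
  · have hca' : c ≤ a' := hx.le_iff_le.mp (hcz.trans hza')
    exact hBC (eq_of_blockSetoid hB hC ha hc (hπ hac hca' (blockSetoid_of_mem hB ha ha')))
  · have hac' : a ≤ c' := hx.le_iff_le.mp (haz.trans hzc')
    exact hBC.symm (eq_of_blockSetoid hC hB hc ha (hπ hca hac' (blockSetoid_of_mem hC hc hc')))

lemma isNoncrossing_iff_isIntervalSetoid (hx : StrictMono x)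
    (hP : (P : Set ℂ) = Set.range (apexPoint x)) {π : Finpartition P} :
    IsNoncrossing π ↔ IsIntervalSetoid (Setoid.comap some (blockSetoid (apexPoint x) π)) := by
  refine ⟨IsNoncrossing.isIntervalSetoid hx.monotone hP, fun hπ B hB C hC hBC => ?_⟩
  by_cases hI : Complex.I ∈ B
  · have hI' : Complex.I ∉ C := fun h => hBC (π.eq_of_mem_parts hB hC hI h)
    exact (disjoint_convexHull_of_apex_notMem hx hP hπ hC hB hBC.symm hI').symm
  · exact disjoint_convexHull_of_apex_notMem hx hP hπ hB hC hBC hI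

/-- The combinatorial model of noncrossing partitions of a line with an apex: partitions of
`Option α`, where `none` labels the apex, whose traces on `α` are interval partitions. -/
abbrev ApexIntervalSetoid (α : Type*) [Preorder α] : Type _ :=
  {r : Setoid (Option α) // IsIntervalSetoid (Setoid.comap some r)}

/-- Noncrossing partitions of points on the real axis and an apex, in terms of labels. -/
noncomputable def NC.apexOrderIso (hx : StrictMono x)
    (hP : (P : Set ℂ) = Set.range (apexPoint x)) : NC P ≃o ApexIntervalSetoid α :=
  orderIsoSubtypeCongr (blockSetoidOrderIso hP (apexPoint_injective hx.injective))
    fun _ => isNoncrossing_iff_isIntervalSetoid hx hP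

end Apex

section LastPoint

variable {m : ℕ}

/-- The label of the rightmost point on the line. -/
abbrev lastLabel (m : ℕ) : Option (Fin (m + 2)) := some (Fin.last (m + 1))

/-- The label of the left neighbour of the rightmost point on the line. -/
abbrev prevLabel (m : ℕ) : Option (Fin (m + 2)) := some (Fin.last m).castSucc

/-- The rightmost point of the line is a singleton block or shares the block of its left neighbour:
condition `A` for the combinatorial model. -/
def LastIsolatedOrLinked (r : Setoid (Option (Fin (m + 2)))) : Prop :=
  {lastLabel m} ∈ r.classes ∨ r (prevLabel m) (lastLabel m)

/-- The rightmost point of the line and the apex form a block: condition `B` for the combinatorial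
model. -/
def LastPairedWithApex (r : Setoid (Option (Fin (m + 2)))) : Prop :=
  {lastLabel m, none} ∈ r.classes

lemma lastIsolatedOrLinked_or_lastPairedWithApex {r : Setoid (Option (Fin (m + 2)))}
    (hr : IsIntervalSetoid (Setoid.comap some r)) :
    LastIsolatedOrLinked r ∨ LastPairedWithApex r := by
  by_cases hlink : r (prevLabel m) (lastLabel m)
  · exact .inl (.inr hlink)
  have eq_last (a : Fin (m + 2)) (ha : r (some a) (lastLabel m)) : a = Fin.last (m + 1) := by
    by_contra hne
    have hprev : r (some a) (prevLabel m) :=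
      hr (Fin.le_castSucc_iff.mpr (Fin.lt_last_iff_ne_last.mpr hne)) (Fin.le_last _) ha
    exact hlink (r.trans' (r.symm' hprev) ha)
  by_cases hapex : r none (lastLabel m)
  · refine .inr ⟨lastLabel m, Set.ext ?_⟩
    rintro (_ | a)
    · simpa using hapex
    · simpa using ⟨fun h => h ▸ r.refl' _, eq_last a⟩
  · refine .inl (.inl ⟨lastLabel m, Set.ext ?_⟩)
    rintro (_ | a)
    · simpa using hapex
    · simpa using ⟨fun h => h ▸ r.refl' _, eq_last a⟩

lemma LastPairedWithApex.not_lastIsolatedOrLinked {r : Setoid (Option (Fin (m + 2)))}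
    (hr : LastPairedWithApex r) : ¬ LastIsolatedOrLinked r := by
  have rel_last := rel_iff_mem_of_mem_classes hr (Set.mem_insert _ _)
  rintro (hisolated | hlink)
  · have hapex : r (lastLabel m) none := (rel_last none).mpr (by simp)
    simpa using (rel_iff_mem_of_mem_classes hisolated rfl none).mp hapex
  · simpa [Fin.ext_iff] using (rel_last (prevLabel m)).mp (r.symm' hlink)

lemma castSucc_predAbove_last {a : Fin (m + 2)} (ha : a ≠ Fin.last (m + 1)) :
    ((Fin.last m).predAbove a).castSucc = a := by
  rw [Fin.predAbove_last_of_ne_last ha, Fin.castSucc_castPred]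

/-- Removing the rightmost point of the line. -/
def restrictInit (r : ApexIntervalSetoid (Fin (m + 2))) : ApexIntervalSetoid (Fin (m + 1)) :=
  ⟨Setoid.comap (Option.map Fin.castSucc) r.1, r.2.comap Fin.strictMono_castSucc.monotone⟩

lemma restrictInit_mono : Monotone (restrictInit (m := m)) :=
  fun _ _ hrr' _ _ h => hrr' h

open Classical in
/-- `1` if the rightmost point of the line shares the block of its left neighbour, else `0`. -/
noncomputable def linkIndex (r : Setoid (Option (Fin (m + 2)))) : Fin 2 :=
  if r (prevLabel m) (lastLabel m) then 1 else 0

lemma linkIndex_eq_one_iff {r : Setoid (Option (Fin (m + 2)))} :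
    linkIndex r = 1 ↔ r (prevLabel m) (lastLabel m) := by
  simp [linkIndex]

lemma linkIndex_mono : Monotone (linkIndex (m := m)) := by
  intro r r' hrr'
  by_cases h : r (prevLabel m) (lastLabel m)
  · exact (linkIndex_eq_one_iff.mpr (hrr' h)).symm ▸ Fin.le_last _
  · simp [linkIndex, h]

/-- The labels which an extension by a new rightmost point separates from the old ones: that point
itself for `i = 0`, none for `i = 1`. -/
def separatedLast (m : ℕ) (i : Fin 2) : Set (Option (Fin (m + 2))) :=
  {o | i = 0 ∧ o = lastLabel m}

lemma separatedLast_subsingleton (m : ℕ) (i : Fin 2) : (separatedLast m i).Subsingleton :=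
  fun _ ho _ ho' => ho.2.trans ho'.2.symm

lemma isUpperSet_some_preimage_separatedLast (m : ℕ) (i : Fin 2) :
    IsUpperSet (some ⁻¹' separatedLast m i) := by
  rintro a b hab ⟨hi, ha⟩
  exact ⟨hi, congrArg some (Fin.last_le_iff.mp ((Option.some_injective _ ha).ge.trans hab))⟩

/-- The extension of a noncrossing partition by a new rightmost point, which is isolated for `i = 0`
and joins the block of its left neighbour for `i = 1`. -/
def extendLast (s : ApexIntervalSetoid (Fin (m + 1))) (i : Fin 2) :
    ApexIntervalSetoid (Fin (m + 2)) :=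
  ⟨comapSeparating (Option.map (Fin.last m).predAbove) (separatedLast m i) s.1,
    s.2.comapSeparating (Fin.predAbove_right_monotone _)
      (isUpperSet_some_preimage_separatedLast m i)⟩

lemma extendLast_mono {s s' : ApexIntervalSetoid (Fin (m + 1))} (hs : s ≤ s') {i j : Fin 2}
    (hij : i ≤ j) : extendLast s i ≤ extendLast s' j := by
  intro o o' h
  obtain ⟨hρ, hZ⟩ := comapSeparating_iff.mp h
  refine comapSeparating_iff.mpr ⟨hs hρ, and_congr_right fun hj => ?_⟩
  obtain rfl : i = 0 := Fin.le_zero_iff.mp (hj ▸ hij)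
  simpa [separatedLast] using hZ

lemma extendLast_prevLabel_lastLabel (s : ApexIntervalSetoid (Fin (m + 1))) (i : Fin 2) :
    (extendLast s i).1 (prevLabel m) (lastLabel m) ↔ i = 1 := by
  have hne : (Fin.last m).castSucc ≠ Fin.last (m + 1) := (Fin.castSucc_lt_last _).ne
  rw [extendLast, comapSeparating_iff]
  simp only [Option.map_some, Fin.predAbove_last_castSucc, Fin.predAbove_right_last,
    s.1.refl' _, true_and, separatedLast, Set.mem_ofPred_eq, Option.some.injEq, hne, and_false,
    and_true, false_iff]
  omega

lemma linkIndex_extendLast (s : ApexIntervalSetoid (Fin (m + 1))) (i : Fin 2) :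
    linkIndex (extendLast s i).1 = i := by
  have h : linkIndex (extendLast s i).1 = 1 ↔ i = 1 :=
    linkIndex_eq_one_iff.trans (extendLast_prevLabel_lastLabel s i)
  omega

lemma lastIsolatedOrLinked_extendLast (s : ApexIntervalSetoid (Fin (m + 1))) (i : Fin 2) :
    LastIsolatedOrLinked (extendLast s i).1 := by
  rcases Fin.exists_fin_two.mp ⟨i, rfl⟩ with rfl | rfl
  · have hZ : separatedLast m 0 = {lastLabel m} := Set.ext fun o => and_iff_right rfl
    refine .inl (hZ ▸ mem_classes_comapSeparating (fun o ho o' ho' => ?_) ⟨lastLabel m, rfl, rfl⟩)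
    rw [separatedLast_subsingleton m 0 ho ho']
  · exact .inr ((extendLast_prevLabel_lastLabel s 1).mpr rfl)

lemma restrictInit_extendLast (s : ApexIntervalSetoid (Fin (m + 1))) (i : Fin 2) :
    restrictInit (extendLast s i) = s := by
  refine Subtype.ext (comap_comapSeparating ?_ ?_ s.1) <;> rintro (_ | a)
  · rfl
  · exact congrArg some Fin.predAbove_last_castSucc
  · exact fun h => nomatch h.2
  · exact fun h => (Fin.castSucc_lt_last a).ne (Option.some_injective _ h.2)

lemma extendLast_restrictInit {r : ApexIntervalSetoid (Fin (m + 2))}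
    (hr : LastIsolatedOrLinked r.1) : extendLast (restrictInit r) (linkIndex r.1) = r := by
  refine Subtype.ext (comapSeparating_comap ?_ ?_ ?_)
  · rintro (_ | a) ha
    · exact r.1.refl' _
    by_cases hlast : a = Fin.last (m + 1)
    · subst hlast
      have hindex : linkIndex r.1 ≠ 0 := fun h => ha ⟨h, rfl⟩
      have hlink : r.1 (prevLabel m) (lastLabel m) := linkIndex_eq_one_iff.mp (by omega)
      simpa using r.1.symm' hlink
    · simp only [Option.map_some, castSucc_predAbove_last hlast]
      exact r.1.refl' _
  · intro o ho o' ho'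
    rw [separatedLast_subsingleton m _ ho ho']
  · rintro _ ⟨hi, rfl⟩ o
    have hlink : ¬ r.1 (prevLabel m) (lastLabel m) := fun h =>
      zero_ne_one (hi.symm.trans (linkIndex_eq_one_iff.mpr h))
    rw [rel_iff_mem_of_mem_classes (hr.resolve_right hlink) rfl]
    exact (and_iff_right hi).symm

/-- Condition `A`: such a partition is determined by its restriction to the remaining points and by
whether the rightmost point is linked to its left neighbour. -/
noncomputable def lastIsolatedOrLinkedOrderIso (m : ℕ) :
    {r : ApexIntervalSetoid (Fin (m + 2)) // LastIsolatedOrLinked r.1} ≃o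
      ApexIntervalSetoid (Fin (m + 1)) × Fin 2 :=
  Equiv.toOrderIso
    { toFun := fun r => (restrictInit r.1, linkIndex r.1.1)
      invFun := fun s => ⟨extendLast s.1 s.2, lastIsolatedOrLinked_extendLast s.1 s.2⟩
      left_inv := fun r => Subtype.ext (extendLast_restrictInit r.2)
      right_inv := fun s =>
        Prod.ext (restrictInit_extendLast s.1 s.2) (linkIndex_extendLast s.1 s.2) }
    (fun _ _ h => ⟨restrictInit_mono h, linkIndex_mono h⟩)
    (fun _ _ h => extendLast_mono h.1 h.2)

/-- The retraction of the labels onto those of the remaining points on the line which collapses the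
rightmost point and the apex. -/
def collapseLastAndApex (m : ℕ) (o : Option (Fin (m + 2))) : Fin (m + 1) :=
  o.elim (Fin.last m) (Fin.last m).predAbove

lemma collapseLastAndApex_of_mem {o : Option (Fin (m + 2))}
    (ho : o ∈ ({lastLabel m, none} : Set (Option (Fin (m + 2))))) :
    collapseLastAndApex m o = Fin.last m := by
  rcases ho with rfl | rfl
  · exact Fin.predAbove_right_last
  · rfl

lemma isUpperSet_some_preimage_lastLabel_none (m : ℕ) :
    IsUpperSet (some ⁻¹' ({lastLabel m, none} : Set (Option (Fin (m + 2))))) := by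
  intro a b hab ha
  obtain rfl : a = Fin.last (m + 1) := by simpa using ha
  exact .inl (congrArg some (Fin.last_le_iff.mp hab))

/-- The interval partition of the line obtained by removing the rightmost point and the apex. -/
def initTrace (r : ApexIntervalSetoid (Fin (m + 2))) :
    {s : Setoid (Fin (m + 1)) // IsIntervalSetoid s} :=
  ⟨Setoid.comap (some ∘ Fin.castSucc) r.1, r.2.comap Fin.strictMono_castSucc.monotone⟩

/-- The extension of an interval partition of the line by a block consisting of a new rightmost
point and the apex. -/
def extendLastAndApex (s : {s : Setoid (Fin (m + 1)) // IsIntervalSetoid s}) :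
    ApexIntervalSetoid (Fin (m + 2)) :=
  ⟨comapSeparating (collapseLastAndApex m) {lastLabel m, none} s.1,
    s.2.comapSeparating (Fin.predAbove_right_monotone _)
      (isUpperSet_some_preimage_lastLabel_none m)⟩

lemma lastPairedWithApex_extendLastAndApex
    (s : {s : Setoid (Fin (m + 1)) // IsIntervalSetoid s}) :
    LastPairedWithApex (extendLastAndApex s).1 :=
  mem_classes_comapSeparating (fun _ ho _ ho' =>
    (collapseLastAndApex_of_mem ho).trans (collapseLastAndApex_of_mem ho').symm)
    (Set.insert_nonempty _ _)

lemma initTrace_extendLastAndApex (s : {s : Setoid (Fin (m + 1)) // IsIntervalSetoid s}) :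
    initTrace (extendLastAndApex s) = s := by
  have hρ : Function.LeftInverse (collapseLastAndApex m) (some ∘ Fin.castSucc) :=
    fun _ => Fin.predAbove_last_castSucc
  refine Subtype.ext (comap_comapSeparating hρ ?_ s.1)
  rintro a (h | h)
  · exact (Fin.castSucc_lt_last a).ne (Option.some_injective _ h)
  · nomatch h

lemma extendLastAndApex_initTrace {r : ApexIntervalSetoid (Fin (m + 2))}
    (hr : LastPairedWithApex r.1) : extendLastAndApex (initTrace r) = r := by
  refine Subtype.ext (comapSeparating_comap ?_ ?_ fun o => rel_iff_mem_of_mem_classes hr)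
  · rintro (_ | a) ha
    · exact absurd (.inr rfl) ha
    · have hlast : a ≠ Fin.last (m + 1) := fun h => ha (.inl (congrArg some h))
      simp only [collapseLastAndApex, Option.elim_some, Function.comp_apply,
        castSucc_predAbove_last hlast]
      exact r.1.refl' _
  · exact fun _ ho _ ho' =>
      (collapseLastAndApex_of_mem ho).trans (collapseLastAndApex_of_mem ho').symm

/-- Condition `B`: such a partition is determined by an interval partition of the remaining points
on the line. -/
noncomputable def lastPairedWithApexOrderIso (m : ℕ) :
    {r : ApexIntervalSetoid (Fin (m + 2)) // LastPairedWithApex r.1} ≃o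
      {s : Setoid (Fin (m + 1)) // IsIntervalSetoid s} :=
  Equiv.toOrderIso
    { toFun := fun r => initTrace r.1
      invFun := fun s => ⟨extendLastAndApex s, lastPairedWithApex_extendLastAndApex s⟩
      left_inv := fun r => Subtype.ext (extendLastAndApex_initTrace r.2)
      right_inv := initTrace_extendLastAndApex }
    (fun _ _ h _ _ hab => h hab)
    (fun _ _ h => comapSeparating_mono h)

end LastPoint

section Tconfig

/-- The labelling of `T_n`. Labels start at `0`, so `k : Fin n` belongs to `x_{k+1} = k + 1`. -/
noncomputable abbrev tPoint (n : ℕ) : Option (Fin n) → ℂ := apexPoint fun k : Fin n => (k : ℝ) + 1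

lemma strictMono_val_add_one (n : ℕ) : StrictMono fun k : Fin n => (k : ℝ) + 1 :=
  fun _ _ h => add_lt_add_left (Nat.cast_lt.mpr h) 1

lemma tPoint_some {n : ℕ} (k : Fin n) : tPoint n (some k) = ((k + 1 : ℕ) : ℂ) := by
  simp [apexPoint]

lemma coe_Tconfig (n : ℕ) : (Tconfig n : Set ℂ) = Set.range (tPoint n) := by
  ext z
  simp only [Tconfig, coe_union, coe_image, coe_Icc, coe_singleton, Set.mem_union, Set.mem_image,
    Set.mem_Icc, Set.mem_singleton_iff, Set.mem_range, Option.exists, tPoint_some]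
  rw [or_comm]
  refine or_congr eq_comm ⟨?_, ?_⟩
  · rintro ⟨k, ⟨hk, hkn⟩, rfl⟩
    exact ⟨⟨k - 1, by omega⟩, by simp [Nat.sub_add_cancel hk]⟩
  · rintro ⟨k, rfl⟩
    exact ⟨k + 1, ⟨by omega, k.2⟩, rfl⟩

/-- Noncrossing partitions of `T_n` in terms of labels. -/
noncomputable def NC.labelOrderIso (n : ℕ) : NC (Tconfig n) ≃o ApexIntervalSetoid (Fin n) :=
  NC.apexOrderIso (strictMono_val_add_one n) (coe_Tconfig n)

lemma NC.mem_parts_iff_labelOrderIso {n : ℕ} (μ : NC (Tconfig n)) {T : Finset ℂ}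
    {Z : Set (Option (Fin n))} (hT : (T : Set ℂ) = tPoint n '' Z) :
    T ∈ μ.parts ↔ Z ∈ (NC.labelOrderIso n μ).1.classes :=
  mem_parts_iff_mem_classes (coe_Tconfig n)
    (apexPoint_injective (strictMono_val_add_one n).injective) μ.1 hT

lemma NC.sameBlock_iff_labelOrderIso {n : ℕ} (μ : NC (Tconfig n)) (i j : Option (Fin n)) :
    μ.SameBlock (tPoint n i) (tPoint n j) ↔ (NC.labelOrderIso n μ).1 i j :=
  (blockSetoid_iff_exists (coe_Tconfig n) μ.1).symm

variable {m : ℕ} (μ : NC (Tconfig (m + 2)))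

lemma tcondA_iff :
    TcondA (m + 2) μ ↔ LastIsolatedOrLinked (NC.labelOrderIso (m + 2) μ).1 := by
  refine or_congr (μ.mem_parts_iff_labelOrderIso ?_) ?_
  · rw [Set.image_singleton, tPoint_some, coe_singleton, Fin.val_last]
  · rw [← μ.sameBlock_iff_labelOrderIso, tPoint_some, tPoint_some]
    rfl

lemma tcondB_iff :
    TcondB (m + 2) μ ↔ LastPairedWithApex (NC.labelOrderIso (m + 2) μ).1 := by
  refine μ.mem_parts_iff_labelOrderIso ?_
  rw [Set.image_pair, tPoint_some, coe_pair, Fin.val_last]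
  rfl

end Tconfig

/-- For `n ≥ 2`: the subposet `A` of `NC(T_n)` where `x_n` is a singleton or blocks with
`x_{n-1}` is isomorphic to `NC(T_{n-1})` times a two-element chain; the subposet `B`
where `{x_n, y}` is a block is isomorphic to the Boolean lattice of subsets of an
`(n-2)`-element set; and `NC(T_n)` is the disjoint union of `A` and `B`. -/
theorem nc_T_recursive (n : ℕ) (hn : 2 ≤ n) :
    Nonempty ({μ : NC (Tconfig n) // TcondA n μ} ≃o NC (Tconfig (n - 1)) × Fin 2) ∧
    Nonempty ({μ : NC (Tconfig n) // TcondB n μ} ≃o Finset (Fin (n - 2))) ∧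
    ∀ μ : NC (Tconfig n), (TcondA n μ ∨ TcondB n μ) ∧ ¬(TcondA n μ ∧ TcondB n μ) := by
  obtain ⟨m, rfl⟩ := Nat.exists_eq_add_of_le' hn
  let e := NC.labelOrderIso (m + 2)
  refine ⟨⟨?_⟩, ⟨?_⟩, fun μ => ?_⟩
  · exact (orderIsoSubtypeCongr e tcondA_iff).trans <| (lastIsolatedOrLinkedOrderIso m).trans <|
      orderIsoProdCongr (NC.labelOrderIso (m + 1)).symm (.refl (Fin 2))
  · exact (orderIsoSubtypeCongr e tcondB_iff).trans <| (lastPairedWithApexOrderIso m).trans <|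
      intervalSetoidOrderIso m
  · rw [tcondA_iff, tcondB_iff]
    exact ⟨lastIsolatedOrLinked_or_lastPairedWithApex (e μ).2,
      fun ⟨hA, hB⟩ => hB.not_lastIsolatedOrLinked hA⟩
end

section
/- For every n ≥ 0, the poset NC(T_n) admits a symmetric chain decomposition: its underlying set can be partitioned into saturated chains C (each consecutive pair of elements of C is a covering pair in NC(T_n)) such that for each chain C, ρ(min C) + ρ(max C) = |T_n| − 1 = n, where ρ(π) = |T_n| − (number of blocks of π). -/
open Finset

/-!
Moving the apex `i` onto the line, either to position `0` in front of all other points or onto a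
point `k ≥ 2` that starts its block, turns a noncrossing partition of `T_n` into a partition of an
integer interval into intervals, that is, into the set of positions glued to their predecessor.
The first choice gives a Boolean lattice on the `n` positions `1, …, n`, occupying the ranks
`0, …, n`; each `k ≥ 2` gives one on the `n - 2` positions `2, …, n` other than `k`, occupying the
ranks `1, …, n - 1`. These Boolean lattices are disjoint, exhaust `NC(T_n)` and are all centered
in the middle rank of `NC(T_n)`, and covers inside them are covers in `NC(T_n)`. So it suffices to
decompose Boolean lattices, which goes by induction on their dimension.
-/

/-- Symmetric chain in a poset with rank function `r` and height `N`, listed in increasing order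
(no law is imposed on `r`, and the empty list counts). -/
structure IsSymmChain {α : Type*} [Preorder α] (r : α → ℕ) (N : ℕ) (l : List α) : Prop where
  isChain : l.IsChain (· ⋖ ·)
  head_add_getLast (h : l ≠ []) : r (l.head h) + r (l.getLast h) = N

/-- Symmetric chain decomposition of a subset `s` of a poset with rank function `r` and height `N`;
covering is meant in the whole poset, not in `s`. -/
def HasSymmChainDecomp {α : Type*} [Preorder α] (r : α → ℕ) (N : ℕ) (s : Set α) : Prop :=
  ∃ C : Set (List α), [] ∉ C ∧ (∀ l ∈ C, IsSymmChain r N l) ∧ (∀ l ∈ C, ∀ x ∈ l, x ∈ s) ∧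
    ∀ x ∈ s, ∃! l, l ∈ C ∧ x ∈ l

section SymmChain

variable {α β ι : Type*} [Preorder α] [Preorder β] {r : α → ℕ} {N : ℕ} {s t : Set α} {l : List α}

lemma IsSymmChain.hasSymmChainDecomp (hl : IsSymmChain r N l) :
    HasSymmChainDecomp r N {x | x ∈ l} := by
  refine ⟨{l} \ {[]}, by simp, by simp [hl], by simp, fun x hx ↦ ⟨l, ?_, by simp⟩⟩
  exact ⟨⟨rfl, List.ne_nil_of_mem hx⟩, hx⟩

lemma HasSymmChainDecomp.iUnion {s : ι → Set α} (h : ∀ i, HasSymmChainDecomp r N (s i))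
    (hs : Pairwise (Function.onFun Disjoint s)) : HasSymmChainDecomp r N (⋃ i, s i) := by
  choose C hnil hC hsub hex using h
  refine ⟨⋃ i, C i, by simpa using hnil, ?_, ?_, ?_⟩
  · simpa using fun l i hl ↦ hC i l hl
  · simpa using fun l i hl x hx ↦ ⟨i, hsub i l hl x hx⟩
  · simp only [Set.mem_iUnion]
    rintro x ⟨i, hx⟩
    obtain ⟨l, ⟨hl, hxl⟩, huniq⟩ := hex i x hx
    refine ⟨l, ⟨⟨i, hl⟩, hxl⟩, ?_⟩
    rintro l' ⟨⟨j, hl'⟩, hxl'⟩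
    obtain rfl : i = j := hs.eq (Set.not_disjoint_iff.2 ⟨x, hx, hsub j l' hl' x hxl'⟩)
    exact huniq l' ⟨hl', hxl'⟩

lemma HasSymmChainDecomp.union (hs : HasSymmChainDecomp r N s) (ht : HasSymmChainDecomp r N t)
    (hst : Disjoint s t) : HasSymmChainDecomp r N (s ∪ t) := by
  rw [Set.union_eq_iUnion]
  exact .iUnion (Bool.forall_bool.2 ⟨ht, hs⟩) (pairwise_disjoint_on_bool.2 hst)

lemma IsSymmChain.map {r' : β → ℕ} {f : α → β} {k : ℕ} (hl : IsSymmChain r N l)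
    (hcov : ∀ x ∈ l, ∀ y ∈ l, x ⋖ y → f x ⋖ f y) (hr : ∀ x ∈ l, r' (f x) = r x + k) :
    IsSymmChain r' (N + 2 * k) (l.map f) where
  isChain := (List.isChain_map f).2 <|
    hl.isChain.imp_of_mem_imp fun x y hx hy hxy ↦ hcov x hx y hy hxy
  head_add_getLast h := by
    have hne : l ≠ [] := by simpa using h
    have := hl.head_add_getLast hne
    rw [List.head_map, List.getLast_map, hr _ (List.head_mem hne), hr _ (List.getLast_mem hne)]
    omega

lemma HasSymmChainDecomp.image {r' : β → ℕ} {f : α → β} {k : ℕ} (h : HasSymmChainDecomp r N s)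
    (hinj : Set.InjOn f s) (hcov : ∀ x ∈ s, ∀ y ∈ s, x ⋖ y → f x ⋖ f y)
    (hr : ∀ x ∈ s, r' (f x) = r x + k) : HasSymmChainDecomp r' (N + 2 * k) (f '' s) := by
  obtain ⟨C, hnil, hC, hsub, hex⟩ := h
  refine ⟨List.map f '' C, by simpa using hnil, ?_, ?_, ?_⟩
  · rintro _ ⟨l, hl, rfl⟩
    exact (hC l hl).map (fun x hx y hy ↦ hcov x (hsub l hl x hx) y (hsub l hl y hy))
      fun x hx ↦ hr x (hsub l hl x hx)
  · rintro _ ⟨l, hl, rfl⟩ _ hfx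
    obtain ⟨x, hx, rfl⟩ := List.mem_map.1 hfx
    exact Set.mem_image_of_mem f (hsub l hl x hx)
  · rintro _ ⟨x, hx, rfl⟩
    obtain ⟨l, ⟨hl, hxl⟩, huniq⟩ := hex x hx
    refine ⟨l.map f, ⟨Set.mem_image_of_mem _ hl, List.mem_map_of_mem hxl⟩, ?_⟩
    rintro _ ⟨⟨l', hl', rfl⟩, hxl'⟩
    obtain ⟨y, hy, hyx⟩ := List.mem_map.1 hxl'
    obtain rfl := hinj (hsub l' hl' y hy) hx hyx
    rw [huniq l' ⟨hl', hy⟩]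

lemma IsSymmChain.concat {y z : α} (hl : IsSymmChain r N (l ++ [y])) (hyz : y ⋖ z)
    (hr : ∀ x y, x ⋖ y → r y = r x + 1) : IsSymmChain r (N + 1) (l ++ [y] ++ [z]) := by
  refine ⟨hl.isChain.append (by simp) (by simpa using hyz), fun _ ↦ ?_⟩
  have hends := hl.head_add_getLast (by simp)
  rw [List.getLast_append_singleton] at hends
  rw [List.head_append_of_ne_nil (by simp), List.getLast_append_singleton, hr _ _ hyz]
  omega

lemma IsSymmChain.of_concat {z : α} (hl : IsSymmChain r (N + 1) (l ++ [z]))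
    (hr : ∀ x y, x ⋖ y → r y = r x + 1) : IsSymmChain r N l := by
  refine ⟨hl.isChain.left_of_append, fun h ↦ ?_⟩
  have hlast : l.getLast h ⋖ z := (List.isChain_append.1 hl.isChain).2.2 _
    (List.getLast?_eq_some_getLast h) z rfl
  have hends := hl.head_add_getLast (by simp)
  rw [List.head_append_of_ne_nil h, List.getLast_append_singleton, hr _ _ hlast] at hends
  omega

variable {e : α → α}

/-- The chain `x₁ ⋖ … ⋖ x_m` and its copy split into the symmetric chains
`x₁ ⋖ … ⋖ x_m ⋖ e x_m` and `e x₁ ⋖ … ⋖ e x_{m-1}`. -/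
lemma IsSymmChain.hasSymmChainDecomp_union_image (hl : IsSymmChain r N l)
    (hr : ∀ x y, x ⋖ y → r y = r x + 1) (hinj : Set.InjOn e {x | x ∈ l})
    (hdisj : Disjoint {x | x ∈ l} (e '' {x | x ∈ l})) (he : ∀ x ∈ l, x ⋖ e x)
    (hcov : ∀ x ∈ l, ∀ y ∈ l, x ⋖ y → e x ⋖ e y) :
    HasSymmChainDecomp r (N + 1) ({x | x ∈ l} ∪ e '' {x | x ∈ l}) := by
  obtain rfl | ⟨m, z, rfl⟩ := l.eq_nil_or_concat'
  · exact ⟨∅, by simp⟩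
  have hz : z ∈ m ++ [z] := by simp
  have hzm : z ∉ m := fun hzm ↦
    have hlt : (m ++ [z]).Pairwise (· < ·) := (hl.isChain.imp fun _ _ h ↦ h.lt).pairwise
    (List.pairwise_append.1 hlt).2.2 z hzm z (by simp) |>.false
  have hlong : IsSymmChain r (N + 1) (m ++ [z] ++ [e z]) := hl.concat (he z hz) hr
  have hmap : IsSymmChain r (N + 2) (m.map e ++ [e z]) := by
    simpa using hl.map hcov fun x hx ↦ hr _ _ (he x hx)
  have hshort : IsSymmChain r (N + 1) (m.map e) := hmap.of_concat hr
  convert hlong.hasSymmChainDecomp.union hshort.hasSymmChainDecomp ?_ using 1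
  · ext x
    simp only [Set.mem_union, Set.mem_ofPred_eq, Set.mem_image, List.mem_append, List.mem_map,
      List.mem_singleton]
    aesop
  · rw [Set.disjoint_left]
    rintro x hx hx'
    obtain ⟨y, hy, rfl⟩ := List.mem_map.1 hx'
    have hyl : y ∈ m ++ [z] := List.mem_append_left _ hy
    rcases List.mem_append.1 hx with hx | hx
    · exact Set.disjoint_left.1 hdisj hx (Set.mem_image_of_mem e hyl)
    · exact hzm (hinj hyl hz (List.mem_singleton.1 hx) ▸ hy)

lemma HasSymmChainDecomp.union_image (h : HasSymmChainDecomp r N s)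
    (hr : ∀ x y, x ⋖ y → r y = r x + 1) (hinj : Set.InjOn e s) (hdisj : Disjoint s (e '' s))
    (he : ∀ x ∈ s, x ⋖ e x) (hcov : ∀ x ∈ s, ∀ y ∈ s, x ⋖ y → e x ⋖ e y) :
    HasSymmChainDecomp r (N + 1) (s ∪ e '' s) := by
  obtain ⟨C, -, hC, hsub, hex⟩ := h
  have hcover : s ∪ e '' s = ⋃ l : C, ({x | x ∈ l.1} ∪ e '' {x | x ∈ l.1}) := by
    have hs : s = ⋃ l : C, {x | x ∈ l.1} := by
      ext x
      simp only [Set.mem_iUnion, Subtype.exists, Set.mem_ofPred_eq, exists_prop]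
      exact ⟨fun hx ↦ (hex x hx).exists, fun ⟨l, hl, hx⟩ ↦ hsub l hl x hx⟩
    rw [Set.iUnion_union_distrib, ← Set.image_iUnion, ← hs]
  rw [hcover]
  refine .iUnion (fun l ↦ ?_) fun l l' hne ↦ ?_
  · have hls : {x | x ∈ l.1} ⊆ s := hsub l.1 l.2
    exact (hC l.1 l.2).hasSymmChainDecomp_union_image hr (hinj.mono hls)
      (hdisj.mono hls (Set.image_mono hls)) (fun x hx ↦ he x (hls hx))
      fun x hx y hy ↦ hcov x (hls hx) y (hls hy)
  · have hls : {x | x ∈ l.1} ⊆ s := hsub l.1 l.2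
    have hls' : {x | x ∈ l'.1} ⊆ s := hsub l'.1 l'.2
    have hll' : Disjoint {x | x ∈ l.1} {x | x ∈ l'.1} := Set.disjoint_left.2 fun x hx hx' ↦
      hne (Subtype.ext ((hex x (hls hx)).unique ⟨l.2, hx⟩ ⟨l'.2, hx'⟩))
    rw [Function.onFun, Set.disjoint_union_left, Set.disjoint_union_right,
      Set.disjoint_union_right]
    exact ⟨⟨hll', hdisj.mono hls (Set.image_mono hls')⟩,
      (hdisj.mono hls' (Set.image_mono hls)).symm, hll'.image hinj hls hls'⟩

end SymmChain

lemma hasSymmChainDecomp_powerset {α : Type*} (S : Finset α) :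
    HasSymmChainDecomp Finset.card #S (S.powerset : Set (Finset α)) := by
  classical
  induction S using Finset.induction_on with
  | empty =>
    have hsing : IsSymmChain Finset.card 0 [(∅ : Finset α)] := ⟨by simp, by simp⟩
    have hset : {A | A ∈ [∅]} = ((∅ : Finset α).powerset : Set (Finset α)) := by ext A; simp
    exact hset ▸ hsing.hasSymmChainDecomp
  | insert a S ha ih =>
    rw [powerset_insert, coe_union, coe_image, card_insert_of_notMem ha]
    have hnot : ∀ A ∈ (S.powerset : Set (Finset α)), a ∉ A := fun A hA h ↦
      ha (mem_powerset.1 hA h)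
    refine ih.union_image (fun A B h ↦ ?_) ?_ ?_ (fun A hA ↦ covBy_insert (hnot A hA)) ?_
    · exact (Nat.covBy_iff_add_one_eq.1 h.card_finset).symm
    · intro A hA B hB h
      simpa [hnot A hA, hnot B hB] using congrArg (Finset.erase · a) h
    · rw [Set.disjoint_left]
      rintro _ hA ⟨B, -, rfl⟩
      exact hnot _ hA (mem_insert_self a B)
    · intro A _ B hB hAB
      obtain ⟨b, hb, rfl⟩ := covBy_iff_exists_insert.1 hAB
      have hba : b ≠ a := fun h ↦ hnot _ hB (h ▸ mem_insert_self b A)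
      rw [insert_comm]
      exact covBy_insert (by simp [hb, hba])

section Finpartition

variable {α β : Type*} [DecidableEq α] {s : Finset α}

lemma finpartition_le_iff {P Q : Finpartition s} :
    P ≤ Q ↔ ∀ a ∈ s, ∀ b ∈ s, P.part a = P.part b → Q.part a = Q.part b := by
  refine ⟨fun h a ha b hb hab ↦ ?_, fun h B hB ↦ ?_⟩
  · obtain ⟨C, hC, hPC⟩ := h (P.part_mem.2 ha)
    rw [Q.part_eq_of_mem hC (hPC (P.mem_part ha)),
      Q.part_eq_of_mem hC (hPC (hab ▸ P.mem_part hb))]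
  · obtain ⟨a, ha⟩ := P.nonempty_of_mem_parts hB
    have has := P.subset hB ha
    refine ⟨Q.part a, Q.part_mem.2 has, fun b hb ↦ ?_⟩
    have hbs := P.subset hB hb
    rw [h a has b hbs (by rw [P.part_eq_of_mem hB ha, P.part_eq_of_mem hB hb])]
    exact Q.mem_part hbs

lemma finpartition_eq_iff {P Q : Finpartition s} :
    P = Q ↔ ∀ a ∈ s, ∀ b ∈ s, P.part a = P.part b ↔ Q.part a = Q.part b := by
  rw [le_antisymm_iff, finpartition_le_iff, finpartition_le_iff]
  grind

lemma card_parts_lt_card_parts {P Q : Finpartition s} (h : P < Q) : #Q.parts < #P.parts := by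
  by_contra! hcard
  have hle : ∀ B ∈ P.parts, ∃ C ∈ Q.parts, B ⊆ C := fun _ hB ↦ h.le hB
  choose! φ hφ hsub using hle
  have hφ_part : ∀ a ∈ s, φ (P.part a) = Q.part a := fun a ha ↦
    have hPa := P.part_mem.2 ha
    (Q.part_eq_of_mem (hφ _ hPa) (hsub _ hPa (P.mem_part ha))).symm
  have hsurj : Set.SurjOn φ P.parts Q.parts := by
    intro C hC
    obtain ⟨a, ha, rfl⟩ := Q.part_surjOn hC
    exact ⟨P.part a, P.part_mem.2 ha, hφ_part a ha⟩
  have hinj := injOn_of_surjOn_of_card_le φ hφ hsurj hcard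
  refine h.not_ge (finpartition_le_iff.2 fun a ha b hb hab ↦ ?_)
  exact hinj (P.part_mem.2 ha) (P.part_mem.2 hb) (by rw [hφ_part a ha, hφ_part b hb, hab])

open Classical in
/-- The partition of `s` into the nonempty fibers of `g`. -/
noncomputable def fiberPartition (s : Finset α) (g : α → β) : Finpartition s :=
  Finpartition.ofSetSetoid (Setoid.ker g) s

variable {g : α → β} {a b : α}

lemma mem_part_fiberPartition :
    b ∈ (fiberPartition s g).part a ↔ a ∈ s ∧ b ∈ s ∧ g a = g b := by
  classical exact Finpartition.mem_part_ofSetSetoid_iff_rel s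

lemma part_fiberPartition_eq_iff (ha : a ∈ s) (hb : b ∈ s) :
    (fiberPartition s g).part a = (fiberPartition s g).part b ↔ g a = g b := by
  rw [← Finpartition.mem_part_iff_part_eq_part _ ha hb, mem_part_fiberPartition]
  simp [ha, hb, eq_comm]

lemma card_parts_fiberPartition [DecidableEq β] :
    #(fiberPartition s g).parts = #(s.image g) := by
  have hpart : ∀ a ∈ s, (fiberPartition s g).part a = {b ∈ s | g b = g a} := by
    intro a ha
    ext b
    rw [mem_part_fiberPartition, mem_filter]
    grind
  have hparts : (fiberPartition s g).parts = (s.image g).image fun c ↦ {b ∈ s | g b = c} := by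
    rw [image_image]
    ext B
    refine ⟨fun hB ↦ ?_, fun hB ↦ ?_⟩
    · obtain ⟨a, ha, rfl⟩ := (fiberPartition s g).part_surjOn hB
      exact mem_image.2 ⟨a, ha, (hpart a ha).symm⟩
    · obtain ⟨a, ha, rfl⟩ := mem_image.1 hB
      rw [Function.comp_apply, ← hpart a ha]
      exact (fiberPartition s g).part_mem.2 ha
  rw [hparts, card_image_of_injOn]
  intro c hc d _ hcd
  obtain ⟨a, ha, rfl⟩ := mem_image.1 hc
  simpa [ha] using (Finset.ext_iff.1 hcd a)

end Finpartition

lemma covBy_of_le_of_strictMono {α : Type*} [PartialOrder α] {r : α → ℕ} (hr : StrictMono r)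
    {x y : α} (hxy : x ≤ y) (h : r y = r x + 1) : x ⋖ y := by
  refine ⟨hxy.lt_of_ne (by rintro rfl; omega), fun z hxz hzy ↦ ?_⟩
  have := hr hxz
  have := hr hzy
  omega

/-- The rank function `ρ(π) = |P| - #blocks(π)` of `NC(P)`. -/
def NC.rank {P : Finset ℂ} (π : NC P) : ℕ := #P - #π.parts

lemma NC.rank_strictMono {P : Finset ℂ} : StrictMono (NC.rank (P := P)) := by
  intro π μ h
  have hlt : #μ.parts < #π.parts := card_parts_lt_card_parts h
  have hle : #π.parts ≤ #P := π.1.card_parts_le_card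
  rw [NC.rank, NC.rank]
  omega

lemma isNoncrossing_fiberPartition {P : Finset ℂ} {γ : Type*} [LinearOrder γ] {g : ℂ → γ}
    (h : ∀ p ∈ P, ∃ (f : ℂ →ₗ[ℝ] ℝ) (c : ℝ), ∀ q ∈ P, g q < g p ↔ f q < c) :
    IsNoncrossing (fiberPartition P g) := by
  have hlt : ∀ p, ∀ q ∈ P, g p < g q →
      Disjoint (convexHull ℝ ((fiberPartition P g).part p : Set ℂ))
        (convexHull ℝ ((fiberPartition P g).part q : Set ℂ)) := by
    intro p q hq hpq
    obtain ⟨f, c, hf⟩ := h q hq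
    have hbelow : convexHull ℝ ((fiberPartition P g).part p : Set ℂ) ⊆ {z | f z < c} :=
      convexHull_min (fun r hr ↦ by
        obtain ⟨-, hr, hpr⟩ := mem_part_fiberPartition.1 hr
        exact (hf r hr).1 (hpr ▸ hpq)) (convex_halfSpace_lt f.isLinear c)
    have habove : convexHull ℝ ((fiberPartition P g).part q : Set ℂ) ⊆ {z | c ≤ f z} :=
      convexHull_min (fun r hr ↦ by
        obtain ⟨-, hr, hqr⟩ := mem_part_fiberPartition.1 hr
        exact not_lt.1 fun hlt ↦ ((hf r hr).2 hlt).ne hqr.symm) (convex_halfSpace_ge f.isLinear c)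
    exact Set.disjoint_of_subset hbelow habove
      (Set.disjoint_left.2 fun _ (hlt : _ < c) hle ↦ not_le.2 hlt hle)
  intro B hB C hC hne
  obtain ⟨p, hp, rfl⟩ := (fiberPartition P g).part_surjOn hB
  obtain ⟨q, hq, rfl⟩ := (fiberPartition P g).part_surjOn hC
  rcases lt_trichotomy (g p) (g q) with hpq | hpq | hpq
  · exact hlt p q hq hpq
  · exact absurd ((part_fiberPartition_eq_iff hp hq).2 hpq) hne
  · exact (hlt q p hp hpq).symm

lemma IsNoncrossing.part_eq_of_mem_segment {P : Finset ℂ} {π : Finpartition P}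
    (hπ : IsNoncrossing π) {a b c : ℂ} (ha : a ∈ P) (hb : b ∈ P) (hc : c ∈ P)
    (hseg : c ∈ segment ℝ a b) (hab : π.part a = π.part b) : π.part c = π.part a := by
  by_contra hne
  have hdisj := hπ (π.part_mem.2 hc) (π.part_mem.2 ha) hne
  refine Set.disjoint_left.1 hdisj (subset_convexHull ℝ _ (π.mem_part hc)) ?_
  exact segment_subset_convexHull (π.mem_part ha) (hab ▸ π.mem_part hb) hseg

lemma natCast_mem_segment {k j l : ℕ} (hkj : k ≤ j) (hjl : j ≤ l) :
    (j : ℂ) ∈ segment ℝ (k : ℂ) l := by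
  have hj : (j : ℝ) ∈ segment ℝ (k : ℝ) l := by
    rw [segment_eq_Icc (by exact_mod_cast hkj.trans hjl)]
    exact ⟨by exact_mod_cast hkj, by exact_mod_cast hjl⟩
  have himage := image_segment ℝ Complex.ofRealCLM.toLinearMap.toAffineMap (k : ℝ) l
  simpa using himage ▸ Set.mem_image_of_mem _ hj

section BlockStart

/-- Reading `A` as the set of those `l` that are glued to `l - 1`, this is the least element of the
block of `k`; whether `0 ∈ A` is irrelevant, since `0` has no predecessor. -/
def blockStart (A : Finset ℕ) (k : ℕ) : ℕ := Nat.findGreatest (· ∉ A) k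

variable {A : Finset ℕ} {k l lo n : ℕ}

lemma blockStart_le : blockStart A k ≤ k := Nat.findGreatest_le k

lemma blockStart_eq_self (h : k ∉ A) : blockStart A k = k := by
  cases k with
  | zero => rfl
  | succ k => exact Nat.findGreatest_eq h

lemma blockStart_notMem (h : blockStart A k ≠ 0) : blockStart A k ∉ A :=
  Nat.findGreatest_of_ne_zero (P := (· ∉ A)) rfl h

lemma le_blockStart (hlk : l ≤ k) (hl : l ∉ A) : l ≤ blockStart A k :=
  Nat.le_findGreatest hlk hl

lemma blockStart_mono : Monotone (blockStart A) := fun _ _ h ↦ Nat.findGreatest_mono_right _ h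

lemma blockStart_le_blockStart_iff : blockStart A k ≤ blockStart A l ↔ blockStart A k ≤ l := by
  refine ⟨fun h ↦ h.trans blockStart_le, fun h ↦ ?_⟩
  obtain h0 | h0 := eq_or_ne (blockStart A k) 0
  · simp [h0]
  · exact le_blockStart h (blockStart_notMem h0)

lemma blockStart_eq_blockStart_iff (hkl : k ≤ l) :
    blockStart A k = blockStart A l ↔ Ioc k l ⊆ A := by
  refine ⟨fun h m hm ↦ ?_, fun h ↦ ?_⟩
  · obtain ⟨hkm, hml⟩ := mem_Ioc.1 hm
    by_contra hmA
    have hle : m ≤ blockStart A l := le_blockStart hml hmA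
    have hlek : blockStart A k ≤ k := blockStart_le
    omega
  · refine (blockStart_mono hkl).antisymm ?_
    by_contra! hlt
    have hk : k < blockStart A l := by
      by_contra! hle
      exact hlt.not_ge (blockStart_le_blockStart_iff.2 hle)
    exact blockStart_notMem (by omega) (h (mem_Ioc.2 ⟨hk, blockStart_le⟩))

lemma image_blockStart_Icc (hA : A ⊆ Ioc lo n) :
    (Icc lo n).image (blockStart A) = Icc lo n \ A := by
  have hlo : lo ∉ A := fun h ↦ by simpa using hA h
  ext m
  simp only [mem_image, mem_Icc, mem_sdiff]
  constructor
  · rintro ⟨k, ⟨hk, hkn⟩, rfl⟩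
    have hle : lo ≤ blockStart A k := le_blockStart hk hlo
    refine ⟨⟨hle, blockStart_le.trans hkn⟩, ?_⟩
    obtain h0 | h0 := eq_or_ne (blockStart A k) 0
    · rwa [h0, ← Nat.le_zero.1 (h0 ▸ hle)]
    · exact blockStart_notMem h0
  · exact fun ⟨hm, hmA⟩ ↦ ⟨m, hm, blockStart_eq_self hmA⟩

/-- The fibers of `h` on the integer interval `[lo, n]` are intervals. -/
def HasIntervalFibers {γ : Type*} (lo n : ℕ) (h : ℕ → γ) : Prop :=
  ∀ ⦃k j l⦄, lo ≤ k → k ≤ j → j ≤ l → l ≤ n → h k = h l → h j = h k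

variable {γ : Type*} {h : ℕ → γ}

lemma HasIntervalFibers.blockStart_eq_iff (hfib : HasIntervalFibers lo n h)
    (hA : ∀ k, k ∈ A ↔ lo < k ∧ k ≤ n ∧ h (k - 1) = h k)
    (hk : k ∈ Icc lo n) (hl : l ∈ Icc lo n) :
    blockStart A k = blockStart A l ↔ h k = h l := by
  wlog hkl : k ≤ l generalizing k l
  · rw [eq_comm, this hl hk (by omega), eq_comm]
  rw [mem_Icc] at hk hl
  rw [blockStart_eq_blockStart_iff hkl]
  constructor
  · intro hsub
    induction l, hkl using Nat.le_induction with
    | base => rfl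
    | succ m hkm ih =>
      have hglue := (hA (m + 1)).1 (hsub (mem_Ioc.2 ⟨by omega, le_rfl⟩))
      rw [ih (by omega) ((Ioc_subset_Ioc_right m.le_succ).trans hsub)]
      exact hglue.2.2
  · intro heq m hm
    obtain ⟨hkm, hml⟩ := mem_Ioc.1 hm
    have hmid := hfib hk.1 hkm.le hml hl.2 heq
    have hpred := hfib (j := m - 1) hk.1 (by omega) (by omega) hl.2 heq
    exact (hA m).2 ⟨by omega, by omega, hpred.trans hmid.symm⟩

/-- The value at `0` may coincide with that of one interval `[i, j] ⊆ [1, n]`; moving `0` to the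
start `i` of this interval makes the fibers intervals, unless `i = 1`, when they already are. -/
lemma HasIntervalFibers.exists_relocate_zero (hfib : HasIntervalFibers 1 n h) :
    ∃ i ≤ n, i ≠ 1 ∧ h i = h 0 ∧ (i ≠ 0 → h (i - 1) ≠ h i) ∧
      HasIntervalFibers (min i 1) n h := by
  classical
  by_cases hex : ∃ i, i ≤ n ∧ h i = h 0 ∧ 2 ≤ i ∧ h 1 ≠ h 0
  · have hspec := Nat.find_spec hex
    set i := Nat.find hex
    obtain ⟨hin, hi0, hi2, h10⟩ := hspec
    refine ⟨i, hin, by omega, hi0, fun _ hpred ↦ ?_, fun k j l hk ↦ hfib (by omega)⟩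
    obtain h3 | h3 := hi2.eq_or_lt
    · exact h10 (by rw [← hi0, ← hpred, ← h3])
    · exact Nat.find_min hex (m := i - 1) (by omega)
        ⟨by omega, hpred.trans hi0, by omega, h10⟩
  · push Not at hex
    refine ⟨0, n.zero_le, zero_ne_one, rfl, by simp, fun k j l _ hkj hjl hln hkl ↦ ?_⟩
    obtain rfl | hk := k.eq_zero_or_pos
    · obtain rfl | hj := j.eq_zero_or_pos
      · rfl
      obtain rfl | hl : l = 1 ∨ 2 ≤ l := by omega
      · obtain rfl : j = 1 := by omega
        exact hkl.symm
      · have h10 : h 1 = h 0 := hex l hln hkl.symm hl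
        rw [← h10]
        exact hfib le_rfl hj hjl hln (h10.trans hkl)
    · exact hfib hk hkj hjl hln hkl

end BlockStart

section Tconfig

open Complex (I)

/-- The position of a point of `Tconfig n` on the line when the apex `I` is moved to position `i`:
either `0`, left of all other points, or the position of one of them. -/
noncomputable def position (i : ℕ) (p : ℂ) : ℕ := open Classical in if p = I then i else ⌊p.re⌋₊

variable {n i j k : ℕ} {A B : Finset ℕ}

lemma position_I : position i I = i := if_pos rfl

lemma position_natCast : position i k = k := by
  have hne : (k : ℂ) ≠ I := fun h ↦ by simpa using congrArg Complex.im h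
  rw [position, if_neg hne, Complex.natCast_re, Nat.floor_natCast]

lemma forall_mem_Tconfig {p : ℂ → Prop} :
    (∀ z ∈ Tconfig n, p z) ↔ p I ∧ ∀ k ∈ Icc 1 n, p k := by
  simp only [Tconfig, forall_mem_union, forall_mem_image, mem_singleton, forall_eq]
  exact and_comm

lemma I_mem_Tconfig : I ∈ Tconfig n := by simp [Tconfig]

lemma natCast_mem_Tconfig (hk : k ∈ Icc 1 n) : (k : ℂ) ∈ Tconfig n :=
  mem_union_left _ (mem_image_of_mem _ hk)

lemma card_Tconfig : #(Tconfig n) = n + 1 := by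
  rw [Tconfig, card_union_of_disjoint, card_image_of_injective _ Nat.cast_injective, Nat.card_Icc,
    card_singleton, Nat.add_sub_cancel]
  rw [disjoint_singleton_right, mem_image]
  rintro ⟨k, -, hk⟩
  simpa using congrArg Complex.im hk

lemma image_position (hi : i ≤ n) : (Tconfig n).image (position i) = Icc (min i 1) n := by
  rw [Tconfig, image_union, image_image, image_singleton, position_I]
  have hcomp : position i ∘ ((↑) : ℕ → ℂ) = id := funext fun k ↦ position_natCast
  rw [hcomp, image_id]
  ext k
  simp only [mem_union, mem_Icc, mem_singleton]
  omega

lemma isNoncrossing_blockStart_position :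
    IsNoncrossing (fiberPartition (Tconfig n) (blockStart A ∘ position i)) := by
  refine isNoncrossing_fiberPartition fun p _ ↦ ?_
  set b := blockStart A (position i p) with hb
  have hlt (q : ℂ) : (blockStart A ∘ position i) q < b ↔ position i q < b := by
    rw [← not_le, hb, Function.comp_apply, blockStart_le_blockStart_iff, not_le]
  -- The half-plane is tilted so that it contains the apex exactly when `i < b`.
  refine ⟨Complex.reLm + (if b ≤ i then (b : ℝ) else 0) • Complex.imLm, b, ?_⟩
  simp only [Function.comp_apply] at hlt ⊢
  refine forall_mem_Tconfig.2 ⟨?_, fun k _ ↦ ?_⟩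
  · rw [hlt, position_I]
    split_ifs with h <;> simp <;> omega
  · rw [hlt, position_natCast]
    split_ifs <;> simp

/-- The noncrossing partition of `Tconfig n` for which, with the apex moved to position `i`, exactly
the points at a position in `A` are in a common block with the points one position before. -/
noncomputable def intervalPartition (n i : ℕ) (A : Finset ℕ) : NC (Tconfig n) :=
  ⟨fiberPartition (Tconfig n) (blockStart A ∘ position i), isNoncrossing_blockStart_position⟩

/-- The positions that may be glued to their predecessor when the apex is at position `i`; for
`i ≠ 0` the position `i` itself is excluded because it starts the block of the apex. -/
def gluable (n i : ℕ) : Finset ℕ := (Ioc (min i 1) n).erase i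

lemma card_gluable (hi : i ≤ n) (hi1 : i ≠ 1) : #(gluable n i) + 2 * min i 1 = n := by
  obtain rfl | hi0 := i.eq_zero_or_pos
  · simp [gluable]
  · rw [gluable, card_erase_of_mem (mem_Ioc.2 ⟨by omega, hi⟩), Nat.card_Ioc]
    omega

lemma rank_intervalPartition (hi : i ≤ n) (hA : A ⊆ gluable n i) :
    (intervalPartition n i A).rank = #A + min i 1 := by
  have hAIoc : A ⊆ Ioc (min i 1) n := hA.trans (erase_subset _ _)
  have hAIcc : A ⊆ Icc (min i 1) n := hAIoc.trans Ioc_subset_Icc_self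
  have hparts : #(intervalPartition n i A).parts = n + 1 - min i 1 - #A := by
    rw [NC.parts, intervalPartition, card_parts_fiberPartition, ← image_image, image_position hi,
      image_blockStart_Icc hAIoc, card_sdiff_of_subset hAIcc, Nat.card_Icc]
  have hcard := card_le_card hAIcc
  rw [Nat.card_Icc] at hcard
  rw [NC.rank, hparts, card_Tconfig]
  omega

lemma intervalPartition_part_eq_iff {p q : ℂ} (hp : p ∈ Tconfig n) (hq : q ∈ Tconfig n) :
    (intervalPartition n i A).1.part p = (intervalPartition n i A).1.part q ↔
      blockStart A (position i p) = blockStart A (position i q) :=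
  part_fiberPartition_eq_iff hp hq

lemma intervalPartition_mono : Monotone (intervalPartition n i) := by
  refine fun A B hAB ↦ finpartition_le_iff.2 fun p hp q hq ↦ ?_
  rw [intervalPartition_part_eq_iff hp hq, intervalPartition_part_eq_iff hp hq]
  wlog hpq : position i p ≤ position i q generalizing p q
  · exact fun h ↦ (this q hq p hp (by omega) h.symm).symm
  rw [blockStart_eq_blockStart_iff hpq, blockStart_eq_blockStart_iff hpq]
  exact fun h ↦ h.trans hAB

lemma intervalPartition_covBy (hi : i ≤ n) (hB : B ⊆ gluable n i) (hAB : A ⋖ B) :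
    intervalPartition n i A ⋖ intervalPartition n i B := by
  refine covBy_of_le_of_strictMono NC.rank_strictMono (intervalPartition_mono hAB.le) ?_
  have hcard := Nat.covBy_iff_add_one_eq.1 hAB.card_finset
  rw [rank_intervalPartition hi hB, rank_intervalPartition hi (hAB.le.trans hB)]
  omega

lemma intervalPartition_injOn (hi : i ≤ n) :
    Set.InjOn (intervalPartition n i) (gluable n i).powerset := by
  have hsub : ∀ A ∈ (gluable n i).powerset, ∀ B,
      intervalPartition n i A = intervalPartition n i B → A ⊆ B := by
    intro A hA B hAB k hk
    have hkIoc := mem_Ioc.1 (mem_of_mem_erase (mem_powerset.1 hA hk))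
    have hpos : ∀ l ∈ Icc (min i 1) n, ∃ p ∈ Tconfig n, position i p = l := fun l hl ↦
      mem_image.1 (image_position hi ▸ hl)
    obtain ⟨p, hp, hpk⟩ := hpos (k - 1) (mem_Icc.2 (by omega))
    obtain ⟨q, hq, hqk⟩ := hpos k (mem_Icc.2 (by omega))
    have hpq := intervalPartition_part_eq_iff (i := i) (A := A) hp hq
    rw [hAB, intervalPartition_part_eq_iff hp hq, hpk, hqk,
      blockStart_eq_blockStart_iff (k.sub_le 1), blockStart_eq_blockStart_iff (k.sub_le 1)] at hpq
    have hsingle : Ioc (k - 1) k = {k} := by ext; simp; omega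
    simpa [hsingle, hk] using hpq
  intro A hA B hB hAB
  exact (hsub A hA B hAB).antisymm (hsub B hB A hAB.symm)

lemma intervalPartition_ne_of_lt (hij : i < j) (hjn : j ≤ n) (hj1 : j ≠ 1) (hjB : j ∉ B) :
    intervalPartition n i A ≠ intervalPartition n j B := by
  intro heq
  have happly (k : ℕ) (hk : k ∈ Icc 1 n) :
      blockStart A i = blockStart A k ↔ blockStart B j = blockStart B k := by
    have hA := intervalPartition_part_eq_iff (i := i) (A := A) I_mem_Tconfig
      (natCast_mem_Tconfig hk)
    rwa [heq, intervalPartition_part_eq_iff I_mem_Tconfig (natCast_mem_Tconfig hk), position_I,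
      position_I, position_natCast, position_natCast, Iff.comm] at hA
  have hglued : Ioc i j ⊆ A := (blockStart_eq_blockStart_iff hij.le).1
    ((happly j (mem_Icc.2 (by omega))).2 rfl)
  have hstart : blockStart B j = blockStart B (max i 1) := by
    refine (happly _ (mem_Icc.2 (by omega))).1 ((blockStart_eq_blockStart_iff (by omega)).2 ?_)
    exact (Ioc_subset_Ioc_right (by omega)).trans hglued
  have hle : blockStart B (max i 1) ≤ max i 1 := blockStart_le
  rw [← hstart, blockStart_eq_self hjB] at hle
  omega

lemma NC.hasIntervalFibers_part (π : NC (Tconfig n)) :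
    HasIntervalFibers 1 n fun k ↦ π.1.part (if k = 0 then I else k) := by
  intro k j l hk hkj hjl hln hkl
  have hmem : ∀ m, 1 ≤ m → m ≤ n → (m : ℂ) ∈ Tconfig n := fun m hm hmn ↦
    natCast_mem_Tconfig (mem_Icc.2 ⟨hm, hmn⟩)
  simp only [show k ≠ 0 by omega, show j ≠ 0 by omega, show l ≠ 0 by omega, if_false] at hkl ⊢
  exact π.2.part_eq_of_mem_segment (hmem k hk (by omega)) (hmem l (by omega) hln)
    (hmem j (by omega) (by omega)) (natCast_mem_segment hkj hjl) hkl

lemma exists_intervalPartition_eq (π : NC (Tconfig n)) :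
    ∃ i ≤ n, i ≠ 1 ∧ ∃ A ⊆ gluable n i, intervalPartition n i A = π := by
  classical
  obtain ⟨i, hin, hi1, hi0, hpred, hfib⟩ := π.hasIntervalFibers_part.exists_relocate_zero
  set h : ℕ → Finset ℂ := fun k ↦ π.1.part (if k = 0 then I else k)
  have hpart : ∀ p ∈ Tconfig n, h (position i p) = π.1.part p := by
    refine forall_mem_Tconfig.2 ⟨?_, fun k hk ↦ ?_⟩
    · rw [position_I]
      exact hi0
    · rw [position_natCast]
      exact congrArg π.1.part (if_neg (Nat.one_le_iff_ne_zero.1 (mem_Icc.1 hk).1))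
  let A := {k ∈ gluable n i | h (k - 1) = h k}
  have hA (k : ℕ) : k ∈ A ↔ min i 1 < k ∧ k ≤ n ∧ h (k - 1) = h k := by
    simp only [A, gluable, mem_filter, mem_erase, mem_Ioc]
    refine ⟨by tauto, fun ⟨hk, hkn, heq⟩ ↦ ⟨⟨?_, hk, hkn⟩, heq⟩⟩
    rintro rfl
    exact hpred (by omega) heq
  refine ⟨i, hin, hi1, A, filter_subset _ _, Subtype.ext (finpartition_eq_iff.2 ?_)⟩
  intro p hp q hq
  have hpos : ∀ r ∈ Tconfig n, position i r ∈ Icc (min i 1) n := fun r hr ↦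
    image_position hin ▸ mem_image_of_mem _ hr
  rw [intervalPartition_part_eq_iff hp hq,
    hfib.blockStart_eq_iff hA (hpos p hp) (hpos q hq),
    hpart p hp, hpart q hq]

lemma hasSymmChainDecomp_NC_Tconfig (n : ℕ) :
    HasSymmChainDecomp NC.rank n (Set.univ : Set (NC (Tconfig n))) := by
  have hcover : (Set.univ : Set (NC (Tconfig n))) = ⋃ i : {i // i ≤ n ∧ i ≠ 1},
      intervalPartition n i '' (gluable n i).powerset := by
    refine (Set.eq_univ_of_forall fun π ↦ ?_).symm
    obtain ⟨i, hin, hi1, A, hA, rfl⟩ := exists_intervalPartition_eq π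
    exact Set.mem_iUnion.2 ⟨⟨i, hin, hi1⟩, A, mem_powerset.2 hA, rfl⟩
  rw [hcover]
  refine .iUnion (fun ⟨i, hin, hi1⟩ ↦ ?_) ((pairwise_disjoint_on _).2 ?_)
  · have himage := (hasSymmChainDecomp_powerset (gluable n i)).image (r' := NC.rank)
      (intervalPartition_injOn hin)
      (fun A _ B hB ↦ intervalPartition_covBy hin (mem_powerset.1 hB))
      fun A hA ↦ rank_intervalPartition hin (mem_powerset.1 hA)
    rwa [card_gluable hin hi1] at himage
  · rintro i ⟨j, hjn, hj1⟩ hij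
    refine Set.disjoint_left.2 ?_
    rintro _ ⟨A, -, rfl⟩ ⟨B, hB, heq⟩
    have hjB : j ∉ B := fun hj ↦ notMem_erase j _ (mem_powerset.1 hB hj)
    exact intervalPartition_ne_of_lt hij hjn hj1 hjB heq.symm

end Tconfig

/-- For every `n ≥ 0`, `NC(T_n)` admits a symmetric chain decomposition: it can be
partitioned into saturated chains (consecutive elements are covering pairs), each of
which satisfies `ρ(min C) + ρ(max C) = |T_n| - 1 = n`, where
`ρ(π) = |T_n| - #blocks(π)`. -/
theorem nc_T_symmetric_chain_decomposition (n : ℕ) :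
    ∃ chains : Set (List (NC (Tconfig n))),
      [] ∉ chains ∧
      (∀ x : NC (Tconfig n), ∃! l, l ∈ chains ∧ x ∈ l) ∧
      (∀ l ∈ chains, List.Chain' (· ⋖ ·) l) ∧
      ∀ l ∈ chains, ∀ h : l ≠ [],
        ((Tconfig n).card - (l.head h).parts.card) +
            ((Tconfig n).card - (l.getLast h).parts.card) = n := by
  obtain ⟨C, hnil, hC, -, hex⟩ := hasSymmChainDecomp_NC_Tconfig n
  exact ⟨C, hnil, fun x ↦ hex x (Set.mem_univ x), fun l hl ↦ (hC l hl).isChain,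
    fun l hl ↦ (hC l hl).head_add_getLast⟩
end

section
/- Let t_n denote the cardinality of NC(T_n). For every n ≥ 2, t_n = (n + 3)·2^{n−2}. -/
open Finset

/-! Build the configuration by inserting one point `a` at a time: a noncrossing partition of
`insert a s` is a noncrossing partition of `s` together with a block that `a` can join without
creating a crossing, or the choice of making `{a}` a new block. If `a` is off the affine span of
`s`, every block can be joined, so a partition with `k` blocks extends in `k + 1` ways. If `a` is
an extreme point of a collinear set with neighbour `b`, only the block of `b` can be joined, so by
Pascal's rule `n + 1` collinear points have `n.choose k` noncrossing partitions with `k + 1`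
blocks. Hence `t_n` is the sum of `(n - 1).choose k * (k + 2)` over `k`. -/

section Finpartition

variable {α : Type*} [DecidableEq α] {s B : Finset α} {a : α}

theorem subset_of_mem_insert_empty_parts {π : Finpartition s} (hB : B ∈ insert ∅ π.parts) :
    B ⊆ s := by
  rcases mem_insert.1 hB with rfl | hB
  exacts [empty_subset s, π.subset hB]

/-- The partition of `insert a s` obtained from `π` by adding the new point `a` to the block `B`.
The choice `B = ∅` stands for making `{a}` a block of its own. -/
def insertPoint (π : Finpartition s) (ha : a ∉ s) (hB : B ∈ insert ∅ π.parts) :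
    Finpartition (insert a s) :=
  (π.avoid B).extend (b := insert a B) (insert_ne_empty a B)
    (disjoint_insert_right.2 ⟨fun h ↦ ha (sdiff_subset h), sdiff_disjoint⟩)
    (by rw [sup_eq_union, union_insert,
      sdiff_union_of_subset (subset_of_mem_insert_empty_parts hB)])

theorem insertPoint_parts (π : Finpartition s) (ha : a ∉ s) (hB : B ∈ insert ∅ π.parts) :
    (insertPoint π ha hB).parts = insert (insert a B) (π.parts.erase B) := by
  have disjoint_of_ne {C} (hC : C ∈ π.parts) (hCB : C ≠ B) : Disjoint C B := by
    rcases mem_insert.1 hB with rfl | hB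
    exacts [disjoint_empty_right C, π.disjoint hC hB hCB]
  refine congrArg (insert (insert a B)) (Finset.ext fun C ↦ ?_)
  rw [Finpartition.mem_avoid, mem_erase]
  constructor
  · rintro ⟨D, hD, hDB, rfl⟩
    have hne : D ≠ B := fun h ↦ hDB h.le
    rw [sdiff_eq_self_of_disjoint (disjoint_of_ne hD hne)]
    exact ⟨hne, hD⟩
  · rintro ⟨hCB, hC⟩
    have hdisj := disjoint_of_ne hC hCB
    exact ⟨C, hC, fun h ↦ π.ne_empty hC (hdisj.eq_bot_of_le h), sdiff_eq_self_of_disjoint hdisj⟩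

theorem insert_notMem_erase_parts (π : Finpartition s) (ha : a ∉ s) (B C : Finset α) :
    insert a B ∉ π.parts.erase C :=
  fun h ↦ ha (π.subset (mem_of_mem_erase h) (mem_insert_self a B))

theorem card_insertPoint_parts (π : Finpartition s) (ha : a ∉ s) (hB : B ∈ insert ∅ π.parts) :
    #(insertPoint π ha hB).parts = #(π.parts.erase B) + 1 := by
  rw [insertPoint_parts, card_insert_of_notMem (insert_notMem_erase_parts π ha B B)]

theorem parts_eq_erase_empty_insert_erase {π : Finpartition s} (hB : B ∈ insert ∅ π.parts) :
    π.parts = (insert B (π.parts.erase B)).erase ∅ := by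
  have hempty : ∅ ∉ π.parts := π.empty_notMem_parts
  rcases mem_insert.1 hB with rfl | hB
  · rw [erase_insert (notMem_erase ∅ π.parts), erase_eq_of_notMem hempty]
  · rw [insert_erase hB, erase_eq_of_notMem hempty]

theorem insertPoint_injective {π π' : Finpartition s} {B' : Finset α} (ha : a ∉ s)
    (hB : B ∈ insert ∅ π.parts) (hB' : B' ∈ insert ∅ π'.parts)
    (h : insertPoint π ha hB = insertPoint π' ha hB') : π = π' ∧ B = B' := by
  have hparts : insert (insert a B) (π.parts.erase B) =
      insert (insert a B') (π'.parts.erase B') := by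
    rw [← insertPoint_parts π ha hB, ← insertPoint_parts π' ha hB', h]
  obtain rfl : B = B' := by
    have hmem : insert a B ∈ insert (insert a B') (π'.parts.erase B') :=
      hparts ▸ mem_insert_self _ _
    have hinsert : insert a B = insert a B' :=
      (mem_insert.1 hmem).resolve_right (insert_notMem_erase_parts π' ha B B')
    rw [← erase_insert fun haB ↦ ha (subset_of_mem_insert_empty_parts hB haB), hinsert,
      erase_insert fun haB ↦ ha (subset_of_mem_insert_empty_parts hB' haB)]
  refine ⟨Finpartition.ext ?_, rfl⟩
  have herase : π.parts.erase B = π'.parts.erase B := by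
    rw [← erase_insert (insert_notMem_erase_parts π ha B B), hparts,
      erase_insert (insert_notMem_erase_parts π' ha B B)]
  rw [parts_eq_erase_empty_insert_erase hB, parts_eq_erase_empty_insert_erase hB', herase]

theorem exists_insertPoint_eq (ha : a ∉ s) (ρ : Finpartition (insert a s)) :
    ∃ (π : Finpartition s) (B : Finset α) (hB : B ∈ insert ∅ π.parts),
      insertPoint π ha hB = ρ := by
  set A := ρ.part a
  have haA : a ∈ A := ρ.mem_part (mem_insert_self a s)
  have hAρ : A ∈ ρ.parts := ρ.part_mem.2 (mem_insert_self a s)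
  have inter_eq_self {D} (hD : D ∈ ρ.parts) (hDA : D ≠ A) : D ∩ s = D :=
    inter_eq_left.2 <| (subset_insert_iff_of_notMem fun haD ↦
      hDA (ρ.eq_of_mem_parts hD hAρ haD haA)).1 (ρ.subset hD)
  have inter_A : A ∩ s = A.erase a := by
    rw [← erase_insert ha, inter_erase, inter_eq_left.2 (ρ.subset hAρ)]
  let π : Finpartition s := ρ.restrict (subset_insert a s)
  have mem_π {C} : C ∈ π.parts ↔ C ≠ ∅ ∧ ∃ D ∈ ρ.parts, D ∩ s = C := by
    simp [π, Finpartition.restrict]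
  have hB : A.erase a ∈ insert ∅ π.parts := by
    rw [mem_insert, mem_π, or_iff_not_imp_left]
    exact fun hne ↦ ⟨hne, A, hAρ, inter_A⟩
  refine ⟨π, A.erase a, hB, Finpartition.ext (Finset.ext fun C ↦ ?_)⟩
  rw [insertPoint_parts, insert_erase haA, mem_insert, mem_erase, mem_π]
  constructor
  · rintro (rfl | ⟨hCA, -, D, hD, rfl⟩)
    · exact hAρ
    · rwa [inter_eq_self hD (by rintro rfl; exact hCA inter_A)]
  · refine fun hC ↦ or_iff_not_imp_left.2 fun hCA ↦
      ⟨?_, ρ.ne_empty hC, C, hC, inter_eq_self hC hCA⟩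
    rintro rfl
    exact ρ.ne_empty hC ((ρ.disjoint hC hAρ hCA).eq_bot_of_le (erase_subset a A))

end Finpartition

section Convex

variable {𝕜 E : Type*} [Field 𝕜] [LinearOrder 𝕜] [IsStrictOrderedRing 𝕜]
  [AddCommGroup E] [Module 𝕜 E]

theorem convex_setOf_wbtw (b a : E) : Convex 𝕜 {x | Wbtw 𝕜 x b a} := by
  intro x hx y hy s t hs ht hst
  simp only [Set.mem_ofPred_eq, wbtw_iff_sameRay_vsub, vsub_eq_sub] at hx hy ⊢
  have : b - (s • x + t • y) = s • (b - x) + t • (b - y) := by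
    rw [smul_sub, smul_sub, sub_add_sub_comm, ← add_smul, hst, one_smul]
  rw [this]
  exact (hx.nonneg_smul_left hs).add_left (hy.nonneg_smul_left ht)

theorem convexHull_insert_inter_affineSpan_subset {s B : Set E} {a : E} (hB : B ⊆ s)
    (ha : a ∉ affineSpan 𝕜 s) :
    convexHull 𝕜 (insert a B) ∩ affineSpan 𝕜 s ⊆ convexHull 𝕜 B := by
  rintro z ⟨hz, hzs⟩
  rcases B.eq_empty_or_nonempty with rfl | hne
  · rw [insert_empty_eq, convexHull_singleton] at hz
    exact absurd (hz ▸ hzs) ha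
  rw [convexHull_insert hne, convexJoin_singleton_left] at hz
  obtain ⟨w, hw, hzw⟩ := Set.mem_iUnion₂.1 hz
  by_contra hzB
  have hws : w ∈ affineSpan 𝕜 s := affineSpan_mono 𝕜 hB (convexHull_subset_affineSpan B hw)
  have hwz : w ≠ z := ne_of_mem_of_not_mem hw hzB
  exact ha (affineSpan_pair_le_of_mem_of_mem hws hzs
    ((mem_segment_iff_wbtw.1 hzw).left_mem_affineSpan_of_right_ne hwz))

theorem convexHull_insert_inter_setOf_wbtw_subset {B : Set E} {a b : E} (hb : b ∈ B) :
    convexHull 𝕜 (insert a B) ∩ {x | Wbtw 𝕜 x b a} ⊆ convexHull 𝕜 B := by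
  rintro z ⟨hz, hzb⟩
  rw [convexHull_insert ⟨b, hb⟩, convexJoin_singleton_left] at hz
  obtain ⟨w, hw, hzw⟩ := Set.mem_iUnion₂.1 hz
  have hwzb : Wbtw 𝕜 w z b := (mem_segment_iff_wbtw.1 hzw).symm.trans_right_left hzb
  exact (convex_convexHull 𝕜 B).segment_subset hw (subset_convexHull 𝕜 B hb)
    (mem_segment_iff_wbtw.2 hwzb)

theorem exists_forall_wbtw_of_collinear [DecidableEq E] {s : Finset E}
    (hs : Collinear 𝕜 (s : Set E)) (hnt : s.Nontrivial) :
    ∃ a ∈ s, ∃ b ∈ s.erase a, ∀ x ∈ s.erase a, Wbtw 𝕜 x b a := by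
  obtain ⟨p, v, hpv⟩ := (collinear_iff_exists_forall_eq_smul_vadd (s : Set E)).1 hs
  choose! r hr using hpv
  obtain ⟨a, ha, hmax⟩ := s.exists_max_image r hnt.nonempty
  obtain ⟨b, hb, hmax'⟩ := (s.erase a).exists_max_image r ((erase_nonempty ha).2 hnt)
  refine ⟨a, ha, b, hb, fun x hx ↦ ?_⟩
  have hwbtw : Wbtw 𝕜 (r x) (r b) (r a) :=
    .of_le_of_le (hmax' x hx) (hmax b (mem_of_mem_erase hb))
  have := hwbtw.map (AffineMap.lineMap p (v +ᵥ p))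
  simpa only [AffineMap.lineMap_apply, vadd_vsub, ← hr x (mem_of_mem_erase hx),
    ← hr b (mem_of_mem_erase hb), ← hr a ha] using this

end Convex

theorem isNoncrossing_insertPoint_iff {s B : Finset ℂ} {a : ℂ} (π : Finpartition s) (ha : a ∉ s)
    (hB : B ∈ insert ∅ π.parts) :
    IsNoncrossing (insertPoint π ha hB) ↔ IsNoncrossing π ∧ ∀ C ∈ π.parts, C ≠ B →
      Disjoint (convexHull ℝ (insert a B : Set ℂ)) (convexHull ℝ (C : Set ℂ)) := by
  let HullsDisjoint (C D : Finset ℂ) : Prop :=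
    Disjoint (convexHull ℝ (C : Set ℂ)) (convexHull ℝ (D : Set ℂ))
  have : Std.Symm HullsDisjoint := ⟨fun _ _ h ↦ h.symm⟩
  have hiff : IsNoncrossing (insertPoint π ha hB) ↔
      (π.parts.erase B : Set (Finset ℂ)).Pairwise HullsDisjoint ∧
        ∀ C ∈ π.parts.erase B, HullsDisjoint (insert a B) C := by
    rw [IsNoncrossing, insertPoint_parts, coe_insert]
    exact Set.pairwise_insert_of_symm_of_notMem (r := HullsDisjoint)
      (insert_notMem_erase_parts π ha B B)
  simp only [hiff, HullsDisjoint, mem_erase, and_imp, coe_insert]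
  constructor
  · rintro ⟨hpair, hdisj⟩
    refine ⟨?_, fun C hC hCB ↦ hdisj C hCB hC⟩
    have hinsert : (insert B (π.parts.erase B) : Set (Finset ℂ)).Pairwise HullsDisjoint :=
      Set.pairwise_insert_of_symm.2 ⟨hpair, fun C hC _ ↦
        (hdisj C (ne_of_mem_erase hC) (mem_of_mem_erase hC)).mono_left
          (convexHull_mono (Set.subset_insert a B))⟩
    refine hinsert.mono ?_
    rw [← coe_insert, coe_subset, subset_insert_iff]
  · rintro ⟨hπ, hdisj⟩
    exact ⟨hπ.mono (coe_subset.2 (erase_subset B π.parts)), fun C hCB hC ↦ hdisj C hC hCB⟩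

namespace NC

variable {s : Finset ℂ} {a b : ℂ}

noncomputable instance (P : Finset ℂ) : Fintype (NC P) := Fintype.ofFinite _

open Classical in
/-- The blocks `B` of `π` to which `a` can be added without creating a crossing. The set `∅` counts
as a block here and stands for making `{a}` a block of its own, as in `insertPoint`. -/
noncomputable def attachable (π : NC s) (a : ℂ) : Finset (Finset ℂ) :=
  {B ∈ insert ∅ π.parts | ∀ C ∈ π.parts, C ≠ B →
    Disjoint (convexHull ℝ (insert a B : Set ℂ)) (convexHull ℝ (C : Set ℂ))}

theorem mem_attachable {π : NC s} {B : Finset ℂ} :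
    B ∈ π.attachable a ↔ B ∈ insert ∅ π.parts ∧ ∀ C ∈ π.parts, C ≠ B →
      Disjoint (convexHull ℝ (insert a B : Set ℂ)) (convexHull ℝ (C : Set ℂ)) := by
  classical exact mem_filter

/-- Removing the point `a` from its block: a noncrossing partition of `insert a s` amounts to a
noncrossing partition of `s` together with a block `a` can be attached to. -/
noncomputable def insertEquiv (ha : a ∉ s) :
    (Σ π : NC s, {B // B ∈ π.attachable a}) ≃ NC (insert a s) :=
  Equiv.ofBijective
    (fun p ↦ ⟨insertPoint p.1.1 ha (mem_attachable.1 p.2.2).1,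
      (isNoncrossing_insertPoint_iff _ ha _).2 ⟨p.1.2, (mem_attachable.1 p.2.2).2⟩⟩) <| by
    constructor
    · rintro ⟨⟨π, hπ⟩, B, hB⟩ ⟨⟨π', hπ'⟩, B', hB'⟩ h
      obtain ⟨rfl, rfl⟩ := insertPoint_injective ha (mem_attachable.1 hB).1
        (mem_attachable.1 hB').1 (congrArg Subtype.val h)
      rfl
    · rintro ⟨ρ, hρ⟩
      obtain ⟨π, B, hB, rfl⟩ := exists_insertPoint_eq ha ρ
      obtain ⟨hπ, hdisj⟩ := (isNoncrossing_insertPoint_iff π ha hB).1 hρ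
      exact ⟨⟨⟨π, hπ⟩, B, mem_attachable.2 ⟨hB, hdisj⟩⟩, rfl⟩

variable {M : Type*} [AddCommMonoid M] (f : ℕ → M)

theorem sum_card_parts_insert (ha : a ∉ s) :
    ∑ ρ : NC (insert a s), f #ρ.parts =
      ∑ π : NC s, ∑ B ∈ π.attachable a, f (#(π.parts.erase B) + 1) := by
  calc ∑ ρ : NC (insert a s), f #ρ.parts
      = ∑ p : Σ π : NC s, {B // B ∈ π.attachable a}, f #(insertEquiv ha p).parts :=
        ((insertEquiv ha).sum_comp fun ρ ↦ f #ρ.parts).symm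
    _ = ∑ p : Σ π : NC s, {B // B ∈ π.attachable a}, f (#(p.1.parts.erase p.2) + 1) :=
        sum_congr rfl fun p _ ↦
          congrArg f (card_insertPoint_parts p.1.1 ha (mem_attachable.1 p.2.2).1)
    _ = ∑ π : NC s, ∑ B ∈ π.attachable a, f (#(π.parts.erase B) + 1) := by
        rw [Fintype.sum_sigma]
        exact sum_congr rfl fun π _ ↦ sum_coe_sort _ fun B ↦ f (#(π.parts.erase B) + 1)

theorem mem_attachable_of_inter_subset {π : NC s} {B : Finset ℂ} (hB : B ∈ insert ∅ π.parts)
    (h : convexHull ℝ (insert a B : Set ℂ) ∩ convexHull ℝ (s : Set ℂ) ⊆ convexHull ℝ (B : Set ℂ)) :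
    B ∈ π.attachable a := by
  refine mem_attachable.2 ⟨hB, fun C hC hCB ↦ Set.disjoint_left.2 fun z hzB hzC ↦ ?_⟩
  have hz : z ∈ convexHull ℝ (B : Set ℂ) :=
    h ⟨hzB, convexHull_mono (coe_subset.2 (π.1.subset hC)) hzC⟩
  rcases mem_insert.1 hB with rfl | hB
  · simp at hz
  · exact Set.disjoint_left.1 (π.2 hB hC hCB.symm) hz hzC

theorem attachable_of_notMem_affineSpan (π : NC s) (ha : a ∉ affineSpan ℝ (s : Set ℂ)) :
    π.attachable a = insert ∅ π.parts := by
  refine Finset.Subset.antisymm (fun B hB ↦ (mem_attachable.1 hB).1) fun B hB ↦ ?_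
  have hBs : (B : Set ℂ) ⊆ s := coe_subset.2 (subset_of_mem_insert_empty_parts hB)
  exact mem_attachable_of_inter_subset hB <|
    (Set.inter_subset_inter_right _ (convexHull_subset_affineSpan _)).trans
      (convexHull_insert_inter_affineSpan_subset hBs ha)

theorem empty_mem_attachable (π : NC s) (ha : a ∉ convexHull ℝ (s : Set ℂ)) :
    ∅ ∈ π.attachable a := by
  refine mem_attachable_of_inter_subset (mem_insert_self ∅ π.parts) ?_
  rintro z ⟨hza, hzs⟩
  rw [coe_empty, insert_empty_eq, convexHull_singleton, Set.mem_singleton_iff] at hza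
  exact absurd (hza ▸ hzs) ha

theorem part_mem_attachable (π : NC s) (hb : b ∈ s)
    (h : convexHull ℝ (s : Set ℂ) ⊆ {x | Wbtw ℝ x b a}) : π.1.part b ∈ π.attachable a :=
  mem_attachable_of_inter_subset (mem_insert_of_mem (π.1.part_mem.2 hb)) <|
    (Set.inter_subset_inter_right _ h).trans
      (convexHull_insert_inter_setOf_wbtw_subset (mem_coe.2 (π.1.mem_part hb)))

theorem attachable_subset_of_forall_wbtw (π : NC s) (hb : b ∈ s)
    (h : ∀ x ∈ s, Wbtw ℝ x b a) : π.attachable a ⊆ {∅, π.1.part b} := by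
  intro B hB
  obtain ⟨hB, hdisj⟩ := mem_attachable.1 hB
  by_contra hne
  rw [mem_insert, mem_singleton, not_or] at hne
  have hBπ : B ∈ π.1.parts := (mem_insert.1 hB).resolve_left hne.1
  obtain ⟨x, hx⟩ := π.1.nonempty_of_mem_parts hBπ
  have hbx : b ∈ segment ℝ x a := mem_segment_iff_wbtw.2 (h x (π.1.subset hBπ hx))
  have hsegment : segment ℝ x a ⊆ convexHull ℝ (insert a B : Set ℂ) :=
    segment_subset_convexHull (Set.mem_insert_of_mem a hx) (Set.mem_insert a B)
  exact Set.disjoint_left.1 (hdisj _ (π.1.part_mem.2 hb) (Ne.symm hne.2)) (hsegment hbx)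
    (subset_convexHull ℝ _ (π.1.mem_part hb))

theorem attachable_of_forall_wbtw (π : NC s) (ha : a ∉ s) (hb : b ∈ s)
    (h : ∀ x ∈ s, Wbtw ℝ x b a) : π.attachable a = {∅, π.1.part b} := by
  have hs : convexHull ℝ (s : Set ℂ) ⊆ {x | Wbtw ℝ x b a} :=
    convexHull_min h (convex_setOf_wbtw b a)
  have has : a ∉ convexHull ℝ (s : Set ℂ) := fun hmem ↦ by
    have haba : Wbtw ℝ a b a := hs hmem
    exact ne_of_mem_of_not_mem hb ha ((wbtw_self_iff ℝ).1 haba)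
  exact (attachable_subset_of_forall_wbtw π hb h).antisymm <| insert_subset_iff.2
    ⟨empty_mem_attachable π has, singleton_subset_iff.2 (part_mem_attachable π hb hs)⟩

theorem card_insert_of_notMem_affineSpan (ha : a ∉ affineSpan ℝ (s : Set ℂ)) :
    Nat.card (NC (insert a s)) = ∑ π : NC s, (#π.parts + 1) := by
  have has : a ∉ s := fun h ↦ ha (subset_affineSpan ℝ _ h)
  rw [Nat.card_eq_fintype_card, Fintype.card_eq_sum_ones, sum_card_parts_insert (fun _ ↦ 1) has]
  refine sum_congr rfl fun π _ ↦ ?_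
  have hempty : ∅ ∉ π.parts := π.1.empty_notMem_parts
  rw [attachable_of_notMem_affineSpan π ha, ← card_eq_sum_ones, card_insert_of_notMem hempty]

theorem sum_card_parts_insert_of_forall_wbtw (ha : a ∉ s) (hb : b ∈ s)
    (h : ∀ x ∈ s, Wbtw ℝ x b a) :
    ∑ ρ : NC (insert a s), f #ρ.parts = ∑ π : NC s, (f (#π.parts + 1) + f #π.parts) := by
  rw [sum_card_parts_insert f ha]
  refine sum_congr rfl fun π _ ↦ ?_
  have hpart : π.1.part b ∈ π.parts := π.1.part_mem.2 hb
  have hempty : ∅ ∉ π.parts := π.1.empty_notMem_parts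
  rw [attachable_of_forall_wbtw π ha hb h, sum_pair (ne_of_mem_of_not_mem hpart hempty).symm,
    erase_eq_of_notMem hempty, card_erase_add_one hpart]

theorem sum_card_parts_singleton (x : ℂ) : ∑ π : NC {x}, f #π.parts = f 1 := by
  have : Unique (Finpartition ({x} : Finset ℂ)) :=
    (Finset.isAtom_singleton x).uniqueFinpartition (P := .indiscrete (singleton_ne_empty x))
  have hparts (π : Finpartition ({x} : Finset ℂ)) : π.parts = {{x}} := by
    rw [Subsingleton.elim π (.indiscrete (singleton_ne_empty x)), Finpartition.indiscrete_parts]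
  have : Unique (NC {x}) :=
    { default := ⟨default, by
        rw [IsNoncrossing, hparts, coe_singleton]
        exact Set.pairwise_singleton _ _⟩
      uniq := fun π ↦ Subtype.ext (Subsingleton.elim _ _) }
  rw [Fintype.sum_unique, parts, hparts, card_singleton]

theorem sum_card_parts_of_collinear {n : ℕ} (hs : Collinear ℝ (s : Set ℂ)) (hn : #s = n + 1) :
    ∑ π : NC s, f #π.parts = ∑ k ∈ range (n + 1), n.choose k • f (k + 1) := by
  induction n generalizing s f with
  | zero =>
    obtain ⟨x, rfl⟩ := card_eq_one.1 hn
    simp [sum_card_parts_singleton]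
  | succ n ih =>
    obtain ⟨a, ha, b, hb, h⟩ := exists_forall_wbtw_of_collinear hs
      (one_lt_card_iff_nontrivial.1 (by omega))
    have hcol : Collinear ℝ (s.erase a : Set ℂ) := hs.subset (coe_subset.2 (erase_subset a s))
    have hcard : #(s.erase a) = n + 1 := by rw [card_erase_of_mem ha, hn, Nat.add_sub_cancel]
    conv_lhs => rw [← insert_erase ha]
    calc ∑ ρ : NC (insert a (s.erase a)), f #ρ.parts
        = ∑ π : NC (s.erase a), (f (#π.parts + 1) + f #π.parts) :=
          sum_card_parts_insert_of_forall_wbtw f (notMem_erase a s) hb h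
      _ = ∑ k ∈ range (n + 1), n.choose k • (f (k + 2) + f (k + 1)) :=
          ih (fun k ↦ f (k + 1) + f k) hcol hcard
      _ = ∑ k ∈ range (n + 2), (n + 1).choose k • f (k + 1) := by
          rw [sum_choose_succ_nsmul fun k _ ↦ f (k + 1)]
          simp only [nsmul_add, sum_add_distrib]
          exact add_comm _ _

end NC

theorem collinear_image_natCast (t : Finset ℕ) :
    Collinear ℝ (t.image fun k : ℕ => (k : ℂ) : Set ℂ) := by
  refine (collinear_iff_exists_forall_eq_smul_vadd _).2 ⟨0, 1, fun z hz ↦ ?_⟩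
  obtain ⟨k, -, rfl⟩ := mem_image.1 hz
  exact ⟨k, by simp⟩

theorem I_notMem_affineSpan_image_natCast (t : Finset ℕ) :
    Complex.I ∉ affineSpan ℝ (t.image fun k : ℕ => (k : ℂ) : Set ℂ) := by
  have hreal : (t.image fun k : ℕ => (k : ℂ) : Set ℂ) ⊆
      (Complex.imLm.ker.toAffineSubspace : Set ℂ) := by
    intro z hz
    obtain ⟨k, -, rfl⟩ := mem_image.1 hz
    exact Complex.natCast_im k
  exact fun h ↦ one_ne_zero (α := ℝ) (affineSpan_le.2 hreal h)

theorem nc_T_card_closed_form_general {s : Finset ℂ} (hs : Collinear ℝ (s : Set ℂ))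
    (hcard : 2 ≤ #s) {y : ℂ} (hy : y ∉ affineSpan ℝ (s : Set ℂ)) :
    Nat.card (NC (insert y s)) = (#s + 3) * 2 ^ (#s - 2) := by
  obtain ⟨m, hm⟩ : ∃ m, #s = m + 2 := Nat.exists_eq_add_of_le' hcard
  calc Nat.card (NC (insert y s))
      = ∑ π : NC s, (#π.parts + 1) := NC.card_insert_of_notMem_affineSpan hy
    _ = ∑ k ∈ range (m + 2), (m + 1).choose k * (k + 2) :=
        NC.sum_card_parts_of_collinear (· + 1) hs hm
    _ = (m + 1) * 2 ^ m + 2 ^ (m + 1) * 2 := by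
        have hmul := Nat.sum_range_mul_choose (m + 1)
        simp only [mul_comm _ ((m + 1).choose _), Nat.add_sub_cancel] at hmul
        simp only [mul_add, sum_add_distrib, ← sum_mul, hmul, Nat.sum_range_choose]
    _ = (#s + 3) * 2 ^ (#s - 2) := by
        rw [hm, Nat.add_sub_cancel]
        ring

/-- For `n ≥ 2`, `t_n = (n + 3) * 2 ^ (n - 2)` where `t_n = |NC(T_n)|`. -/
theorem nc_T_card_closed_form (n : ℕ) (hn : 2 ≤ n) :
    Nat.card (NC (Tconfig n)) = (n + 3) * 2 ^ (n - 2) := by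
  have hcard : #((Icc 1 n).image fun k : ℕ => (k : ℂ)) = n := by
    rw [card_image_of_injective _ Nat.cast_injective, Nat.card_Icc, Nat.add_sub_cancel]
  have hT := nc_T_card_closed_form_general (collinear_image_natCast (Icc 1 n)) (hcard.symm ▸ hn)
    (I_notMem_affineSpan_image_natCast (Icc 1 n))
  rwa [hcard, insert_eq, union_comm] at hT
end
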